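/- arXiv:1708.06659 — 2 statements merged into one kernel-verified Lean document; each statement's English description precedes it below -/
import Mathlib

section
/- Let d, N ∈ ℕ, 1 < p < 2, α ∈ (0,1), c₁, c₂ > 0, Q₀ ⊂ ℝ^d a cube, and let u ∈ W^{1,p}(Q₀;ℝ^N) be such that: (i) V(∇u) ∈ W^{1,2}_loc(Q₀) and ∫_Q|∇(V(∇u))|² ≤ (c₁/R²)∫_{4Q}|V(∇u)|² for every cube Q of sidelength R with 4Q ⊂ Q₀; (ii) u has a continuous representative with [u]_{C^α(Q)} ≤ c₂R^{1−α}((⨍_{2Q}|∇u|^p)^{1/p} + 1) for every cube Q of sidelength R with 3Q ⊂ Q₀. Then for every q ∈ (p, p + 2/(1−α)) one has ∇u ∈ L^q_loc(Q₀), and there is C > 0, depending only on d, N, p, q, α, c₁, c₂, such that (⨍_Q|∇u|^q)^{1/q} ≤ C((⨍_{2Q}|∇u|^p)^{1/p} + 1) for every cube Q with 2Q ⊂ Q₀. -/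
open MeasureTheory Filter Metric Set
open scoped ENNReal Topology RealInnerProductSpace

noncomputable section

/-- `ℝ^d` with the Euclidean norm. -/
abbrev Ed (d : ℕ) : Type := EuclideanSpace ℝ (Fin d)
/-- `ℝ^N` with the Euclidean norm. -/
abbrev En (N : ℕ) : Type := EuclideanSpace ℝ (Fin N)
/-- The space of `N × d` matrices with the Euclidean (Frobenius) norm. -/
abbrev Mat (N d : ℕ) : Type := EuclideanSpace ℝ (Fin N × Fin d)

/-- The open axis-parallel cube with center `c` and sidelength `R`. -/
def cube {d : ℕ} (c : Ed d) (R : ℝ) : Set (Ed d) := {x | ∀ i, |x i - c i| < R / 2}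

/-- The `i`-th partial derivative of a scalar function. -/
def pder {d : ℕ} (φ : Ed d → ℝ) (i : Fin d) (x : Ed d) : ℝ :=
  fderiv ℝ φ x (EuclideanSpace.single i 1)

/-- `g` is the weak gradient of `f` on `U`: for every smooth compactly supported scalar test
function `φ` with support in `U` and all indices `a`, `i`,
`∫_U f^a ∂_i φ = −∫_U g^a_i φ`. -/
def IsWeakGrad {d : ℕ} {ι : Type} [Fintype ι] (U : Set (Ed d))
    (f : Ed d → EuclideanSpace ℝ ι) (g : Ed d → EuclideanSpace ℝ (ι × Fin d)) : Prop :=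
  ∀ φ : Ed d → ℝ, ContDiff ℝ (⊤ : ℕ∞) φ → HasCompactSupport φ → tsupport φ ⊆ U →
    ∀ (a : ι) (i : Fin d),
      ∫ x in U, f x a * pder φ i x = - ∫ x in U, g x (a, i) * φ x

/-- The classical gradient matrix of a (smooth) vector-valued function. -/
def clGrad {d N : ℕ} (φ : Ed d → En N) (x : Ed d) : Mat N d :=
  (WithLp.equiv 2 _).symm fun q => fderiv ℝ φ x (EuclideanSpace.single q.2 1) q.1

/-- `V(η) = |η|^{(p-2)/2} η` (so that `V(0) = 0`). -/
def Vm (p : ℝ) {ι : Type} [Fintype ι] (η : EuclideanSpace ℝ ι) : EuclideanSpace ℝ ι :=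
  ‖η‖ ^ ((p - 2) / 2) • η

/-- `u` (with weak gradient `g`) is a weak solution of `div 𝒜(∇u) = 0` on `U`:
`∫_U 𝒜(∇u)·∇φ = 0` for all smooth compactly supported `φ` with support in `U`. -/
def IsWeakSol {d N : ℕ} (U : Set (Ed d)) (𝒜 : Mat N d → Mat N d)
    (g : Ed d → Mat N d) : Prop :=
  ∀ φ : Ed d → En N, ContDiff ℝ (⊤ : ℕ∞) φ → HasCompactSupport φ → tsupport φ ⊆ U →
    ∫ x in U, ⟪𝒜 (g x), clGrad φ x⟫ = 0

/-!
Where `|∇u| > λ` on a small cube `Q_r`, compare `∇u` with its average against a smooth bump: after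
an integration by parts the Hölder bound makes that average at most `C r^{α - 1}`. Choosing `r` so
that this is `λ / 2`, the monotonicity of `V` forces the average of `|V(∇u) - V(∇u(x))|²` over `Q_r`
to be at least a multiple of `λ ^ p`. The Poincaré inequality then bounds
`λ ^ p |{|∇u| > λ} ∩ Q_r|` by `C r² ∫ |∇V(∇u)|²`, and after averaging over all positions of `Q_r`
inside `Q` and using the Caccioppoli estimate, `|{|∇u| > λ} ∩ Q| ≤ C λ^{-p - 2/(1 - α)}`. The layer
cake formula turns this decay into integrability of `|∇u|^q` for every `q < p + 2/(1 - α)`.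
-/

/-! ### Cubes -/

section Cubes

variable {d : ℕ} {c x z : Ed d} {r R : ℝ}

lemma isOpen_setOf_mem_cube (r : ℝ) : IsOpen {q : Ed d × Ed d | q.2 ∈ cube q.1 r} := by
  have : {q : Ed d × Ed d | q.2 ∈ cube q.1 r} = ⋂ i, {q | |q.2 i - q.1 i| < r / 2} := by
    ext q
    simp [cube]
  rw [this]
  exact isOpen_iInter_of_finite fun i => isOpen_lt (by fun_prop) continuous_const

lemma isOpen_cube (c : Ed d) (R : ℝ) : IsOpen (cube c R) :=
  (isOpen_setOf_mem_cube R).preimage (Continuous.prodMk_right c)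

lemma measurableSet_cube (c : Ed d) (R : ℝ) : MeasurableSet (cube c R) :=
  (isOpen_cube c R).measurableSet

lemma mem_cube_comm : x ∈ cube z r ↔ z ∈ cube x r := by
  simp only [cube, mem_ofPred_eq, abs_sub_comm]

lemma mem_cube_self (z : Ed d) (hr : 0 < r) : z ∈ cube z r := fun i => by simp [hr]

lemma cube_subset_cube_of_mem {a b : ℝ} (hz : z ∈ cube c a) (h : a + b ≤ R) :
    cube z b ⊆ cube c R := fun x hx i => by
  linarith [hz i, hx i, abs_sub_le (x i) (z i) (c i)]

lemma cube_subset_cube {a : ℝ} (h : a ≤ R) : cube c a ⊆ cube c R := fun x hx i => by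
  linarith [hx i]

lemma cube_eq_preimage_pi_Ioo (c : Ed d) (R : ℝ) :
    cube c R = WithLp.ofLp ⁻¹' Set.pi univ fun i => Ioo (c i - R / 2) (c i + R / 2) := by
  ext x
  simp only [cube, mem_ofPred_eq, mem_preimage, Set.mem_pi, mem_univ, forall_const, mem_Ioo,
    abs_sub_lt_iff]
  exact forall_congr' fun i => ⟨fun h => by constructor <;> linarith,
    fun h => by constructor <;> linarith⟩

lemma convex_cube (c : Ed d) (R : ℝ) : Convex ℝ (cube c R) := by
  rw [cube_eq_preimage_pi_Ioo]
  exact (convex_pi fun i _ => convex_Ioo _ _).linear_preimage (WithLp.linearEquiv 2 ℝ _).toLinearMap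

lemma volume_cube (c : Ed d) (hR : 0 ≤ R) : volume (cube c R) = ENNReal.ofReal (R ^ d) := by
  rw [cube_eq_preimage_pi_Ioo, (PiLp.volume_preserving_ofLp (Fin d)).measure_preimage
    (MeasurableSet.univ_pi fun i => measurableSet_Ioo).nullMeasurableSet, Real.volume_pi_Ioo,
    ENNReal.ofReal_pow hR]
  simp

lemma volumeReal_cube (c : Ed d) (hR : 0 ≤ R) : volume.real (cube c R) = R ^ d := by
  rw [measureReal_def, volume_cube c hR, ENNReal.toReal_ofReal (by positivity)]

lemma volume_cube_ne_top (c : Ed d) (hR : 0 ≤ R) : volume (cube c R) ≠ ∞ := by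
  rw [volume_cube c hR]
  exact ENNReal.ofReal_ne_top

lemma closedBall_subset_cube {δ : ℝ} (hx : x ∈ cube c r) (hδ : r / 2 + δ ≤ R / 2) :
    closedBall x δ ⊆ cube c R := fun y hy i => by
  have hyx : |y i - x i| ≤ δ := (PiLp.norm_apply_le (y - x) i).trans (mem_closedBall_iff_norm.1 hy)
  linarith [hx i, abs_sub_le (y i) (x i) (c i)]

lemma norm_le_sqrt_card_mul {ι : Type*} [Fintype ι] {ξ : EuclideanSpace ℝ ι} {m : ℝ}
    (h : ∀ k, |ξ k| ≤ m) : ‖ξ‖ ≤ √(Fintype.card ι) * m := by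
  rcases isEmpty_or_nonempty ι with _ | ⟨⟨k⟩⟩
  · simp [Subsingleton.elim ξ 0]
  have hm : 0 ≤ m := (abs_nonneg _).trans (h k)
  rw [EuclideanSpace.norm_eq, Real.sqrt_le_left (by positivity), mul_pow, Real.sq_sqrt (by simp)]
  calc ∑ i, ‖ξ i‖ ^ 2 ≤ ∑ _i : ι, m ^ 2 := by gcongr with i; exact h i
    _ = Fintype.card ι * m ^ 2 := by simp

lemma sub_mem_cube_zero {y : Ed d} (hx : x ∈ cube c r) (hy : y ∈ cube c r) :
    x - y ∈ cube 0 (2 * r) := fun i => by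
  simp only [PiLp.sub_apply, PiLp.zero_apply, sub_zero]
  linarith [hx i, mem_cube_comm.1 hy i, abs_sub_le (x i) (c i) (y i)]

lemma norm_sub_le_of_mem_cube {y : Ed d} (hx : x ∈ cube c r) (hy : y ∈ cube c r) :
    ‖x - y‖ ≤ √d * r := by
  simpa using norm_le_sqrt_card_mul (ξ := x - y) fun i => by
    simpa using (sub_mem_cube_zero hx hy i).le

end Cubes

section Averaging

variable {d : ℕ} {c z : Ed d} {r s R S : ℝ}

lemma lintegral_lintegral_cube_eq (A : Set (Ed d)) (r : ℝ) {f : Ed d → ℝ≥0∞}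
    (hf : Measurable f) : ∫⁻ z in A, ∫⁻ x in cube z r, f x = ∫⁻ x, f x * volume (A ∩ cube x r) := by
  have hswap : ∀ z x, (cube z r).indicator f x = (cube x r).indicator (fun _ => f x) z := by
    classical
    intro z x
    simp only [indicator_apply]
    exact if_congr mem_cube_comm rfl rfl
  simp_rw [← lintegral_indicator (measurableSet_cube _ r)]
  rw [lintegral_lintegral_swap]
  · refine lintegral_congr fun x => ?_
    simp_rw [hswap]
    rw [lintegral_indicator_const (measurableSet_cube x r),
      Measure.restrict_apply (measurableSet_cube x r), inter_comm]
  · exact ((hf.comp measurable_snd).indicator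
      (isOpen_setOf_mem_cube r).measurableSet).aemeasurable

lemma setLIntegral_cube_mul_le (hr : 0 ≤ r) {f : Ed d → ℝ≥0∞}
    (hf : AEMeasurable f (volume.restrict (cube c R))) :
    (∫⁻ x in cube c R, f x) * ENNReal.ofReal (r ^ d) ≤
      ∫⁻ z in cube c (R + r), ∫⁻ x in cube z r, f x := by
  have hQ := measurableSet_cube c R
  set F := (cube c R).indicator (hf.mk f) with hF
  have hFm : Measurable F := hf.measurable_mk.indicator hQ
  have hFf : F ≤ᵐ[volume] f := by
    filter_upwards [(ae_restrict_iff' hQ).1 hf.ae_eq_mk] with x hx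
    by_cases hxQ : x ∈ cube c R <;> simp [hF, hxQ, hx]
  calc (∫⁻ x in cube c R, f x) * ENNReal.ofReal (r ^ d)
      = ∫⁻ x, F x * ENNReal.ofReal (r ^ d) := by
        rw [lintegral_mul_const _ hFm, hF, lintegral_indicator hQ, lintegral_congr_ae hf.ae_eq_mk]
    _ ≤ ∫⁻ x, F x * volume (cube c (R + r) ∩ cube x r) := by
        refine lintegral_mono fun x => ?_
        by_cases hx : x ∈ cube c R
        · rw [inter_eq_right.2 (cube_subset_cube_of_mem hx le_rfl), volume_cube _ hr]
        · simp [hF, hx]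
    _ = ∫⁻ z in cube c (R + r), ∫⁻ x in cube z r, F x :=
        (lintegral_lintegral_cube_eq _ r hFm).symm
    _ ≤ ∫⁻ z in cube c (R + r), ∫⁻ x in cube z r, f x :=
        lintegral_mono fun z => lintegral_mono_ae (ae_restrict_of_ae hFf)

lemma lintegral_lintegral_cube_le (hr : 0 ≤ r) (hRS : R + r ≤ S) {f : Ed d → ℝ≥0∞}
    (hf : AEMeasurable f (volume.restrict (cube c S))) :
    ∫⁻ z in cube c R, ∫⁻ x in cube z r, f x ≤
      ENNReal.ofReal (r ^ d) * ∫⁻ x in cube c S, f x := by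
  have hQ := measurableSet_cube c S
  set F := (cube c S).indicator (hf.mk f) with hF
  have hFm : Measurable F := hf.measurable_mk.indicator hQ
  have hFf : f =ᵐ[volume.restrict (cube c S)] F :=
    hf.ae_eq_mk.trans (indicator_ae_eq_restrict hQ).symm
  calc ∫⁻ z in cube c R, ∫⁻ x in cube z r, f x
      = ∫⁻ z in cube c R, ∫⁻ x in cube z r, F x :=
        setLIntegral_congr_fun (measurableSet_cube _ _) fun z hz => lintegral_congr_ae
          (ae_restrict_of_ae_restrict_of_subset (cube_subset_cube_of_mem hz hRS) hFf)
    _ = ∫⁻ x, F x * volume (cube c R ∩ cube x r) :=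
        lintegral_lintegral_cube_eq _ r hFm
    _ ≤ ∫⁻ x, F x * ENNReal.ofReal (r ^ d) := by
        refine lintegral_mono fun x => mul_le_mul_right ?_ _
        exact (measure_mono inter_subset_right).trans (volume_cube x hr).le
    _ = ENNReal.ofReal (r ^ d) * ∫⁻ x in cube c S, f x := by
        rw [lintegral_mul_const _ hFm, hF, lintegral_indicator hQ, lintegral_congr_ae hf.ae_eq_mk,
          mul_comm]

lemma setLIntegral_cube_le_of_forall_tile_le (hr : 0 < r) (hs : 0 ≤ s) (hS : R + r + s ≤ S)
    {f h : Ed d → ℝ≥0∞} (hf : AEMeasurable f (volume.restrict (cube c R)))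
    (hh : AEMeasurable h (volume.restrict (cube c S))) {a : ℝ≥0∞} (ha : a ≠ ∞)
    (hle : ∀ z ∈ cube c (R + r), ∫⁻ x in cube z r, f x ≤ a * ∫⁻ x in cube z s, h x) :
    ∫⁻ x in cube c R, f x ≤ a * ENNReal.ofReal ((s / r) ^ d) * ∫⁻ x in cube c S, h x := by
  rw [div_pow, ENNReal.ofReal_div_of_pos (by positivity), ← mul_div_assoc,
    ← ENNReal.mul_div_right_comm, ENNReal.le_div_iff_mul_le (by simp [hr]) (by simp)]
  calc (∫⁻ x in cube c R, f x) * ENNReal.ofReal (r ^ d)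
      ≤ ∫⁻ z in cube c (R + r), ∫⁻ x in cube z r, f x := setLIntegral_cube_mul_le hr.le hf
    _ ≤ ∫⁻ z in cube c (R + r), a * ∫⁻ x in cube z s, h x :=
        setLIntegral_mono' (measurableSet_cube _ _) hle
    _ = a * ∫⁻ z in cube c (R + r), ∫⁻ x in cube z s, h x := lintegral_const_mul' _ _ ha
    _ ≤ a * (ENNReal.ofReal (s ^ d) * ∫⁻ x in cube c S, h x) := by
        gcongr
        exact lintegral_lintegral_cube_le hs hS hh
    _ = a * ENNReal.ofReal (s ^ d) * ∫⁻ x in cube c S, h x := (mul_assoc _ _ _).symm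

lemma setLIntegral_cube_le_of_forall_le (hr : 0 < r) (hR : 0 ≤ R) {f : Ed d → ℝ≥0∞}
    (hf : AEMeasurable f (volume.restrict (cube c R))) {B : ℝ≥0∞}
    (hB : ∀ z ∈ cube c (R + r), ∫⁻ x in cube z r, f x ≤ B) :
    ∫⁻ x in cube c R, f x ≤ ENNReal.ofReal (((R + r) / r) ^ d) * B := by
  rw [div_pow, ENNReal.ofReal_div_of_pos (by positivity), ← ENNReal.mul_div_right_comm,
    ENNReal.le_div_iff_mul_le (by simp [hr]) (by simp)]
  calc (∫⁻ x in cube c R, f x) * ENNReal.ofReal (r ^ d)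
      ≤ ∫⁻ z in cube c (R + r), ∫⁻ x in cube z r, f x := setLIntegral_cube_mul_le hr.le hf
    _ ≤ ∫⁻ _z in cube c (R + r), B := setLIntegral_mono' (measurableSet_cube _ _) hB
    _ = ENNReal.ofReal ((R + r) ^ d) * B := by
        rw [setLIntegral_const, volume_cube c (by positivity), mul_comm]

lemma setAverage_cube_le_of_subset (hr : 0 < r) (hR : 0 < R) (hsub : cube z r ⊆ cube c R)
    {f : Ed d → ℝ} (hf : IntegrableOn f (cube c R)) (hf0 : ∀ x, 0 ≤ f x) :
    ⨍ x in cube z r, f x ≤ (R / r) ^ d * ⨍ x in cube c R, f x := by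
  simp only [setAverage_eq, volumeReal_cube _ hr.le, volumeReal_cube _ hR.le, smul_eq_mul]
  have hint : ∫ x in cube z r, f x ≤ ∫ x in cube c R, f x :=
    setIntegral_mono_set hf (ae_of_all _ hf0) hsub.eventuallyLE
  calc (r ^ d)⁻¹ * ∫ x in cube z r, f x ≤ (r ^ d)⁻¹ * ∫ x in cube c R, f x := by gcongr
    _ = (R / r) ^ d * ((R ^ d)⁻¹ * ∫ x in cube c R, f x) := by
        rw [div_pow]
        field_simp

end Averaging

/-! ### The Poincaré inequality for smooth functions -/

lemma sq_lintegral_mul_le {X : Type*} [MeasurableSpace X] {μ : Measure X} {ρ w : X → ℝ≥0∞}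
    (hρ : AEMeasurable ρ μ) (hw : AEMeasurable w μ) (hρ1 : ∫⁻ x, ρ x ∂μ ≤ 1) :
    (∫⁻ x, ρ x * w x ∂μ) ^ 2 ≤ ∫⁻ x, ρ x * w x ^ 2 ∂μ := by
  have hsqrt : ∀ a : ℝ≥0∞, (a ^ (1 / 2 : ℝ)) ^ 2 = a := fun a => by
    rw [← ENNReal.rpow_natCast, ← ENNReal.rpow_mul]
    norm_num
  have hsplit : ∀ x, ρ x ^ (1 / 2 : ℝ) * (ρ x * w x ^ 2) ^ (1 / 2 : ℝ) = ρ x * w x := fun x => by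
    rw [ENNReal.mul_rpow_of_nonneg _ _ (by norm_num : (0 : ℝ) ≤ 1 / 2), ← mul_assoc,
      ← ENNReal.rpow_add_of_nonneg _ _ (by norm_num) (by norm_num), ← ENNReal.rpow_natCast,
      ← ENNReal.rpow_mul]
    norm_num
  have hCS : ∫⁻ x, ρ x * w x ∂μ ≤
      (∫⁻ x, ρ x ∂μ) ^ (1 / 2 : ℝ) * (∫⁻ x, ρ x * w x ^ 2 ∂μ) ^ (1 / 2 : ℝ) := by
    rw [← lintegral_congr hsplit]
    exact ENNReal.lintegral_mul_norm_pow_le hρ (hρ.mul (hw.pow_const 2)) (by norm_num)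
      (by norm_num) (by norm_num)
  calc (∫⁻ x, ρ x * w x ∂μ) ^ 2
      ≤ (∫⁻ x, ρ x ∂μ) * ∫⁻ x, ρ x * w x ^ 2 ∂μ := by
        simpa only [mul_pow, hsqrt] using pow_le_pow_left' hCS 2
    _ ≤ ∫⁻ x, ρ x * w x ^ 2 ∂μ := mul_le_of_le_one_left' hρ1

lemma setLIntegral_setLIntegral_eq_lintegral_translate {E : Type*} [AddGroup E]
    [MeasurableSpace E] [MeasurableAdd₂ E] {μ : Measure E} [SFinite μ] [μ.IsAddLeftInvariant]
    {Q : Set E} (hQm : MeasurableSet Q) {k : E → E → ℝ≥0∞} (hk : Measurable (Function.uncurry k)) :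
    ∫⁻ x in Q, ∫⁻ y in Q, k x y ∂μ ∂μ =
      ∫⁻ h, ∫⁻ x in Q ∩ (· + h) ⁻¹' Q, k x (x + h) ∂μ ∂μ := by
  have hpre (h : E) : MeasurableSet ((· + h) ⁻¹' Q) := measurable_add_const h hQm
  have hinner (x : E) : ∫⁻ y in Q, k x y ∂μ =
      ∫⁻ h, ((fun q : E × E => q.1 + q.2) ⁻¹' Q).indicator
        (fun q => k q.1 (q.1 + q.2)) (x, h) ∂μ := by
    rw [← lintegral_indicator hQm, ← lintegral_add_left_eq_self _ x]
    rfl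
  simp_rw [hinner]
  rw [lintegral_lintegral_swap]
  · refine lintegral_congr fun h => ?_
    rw [inter_comm, ← Measure.restrict_restrict (hpre h), ← lintegral_indicator (hpre h)]
    rfl
  · have hadd : Measurable fun q : E × E => q.1 + q.2 := by fun_prop
    exact ((hk.comp (measurable_fst.prodMk hadd)).indicator (hadd hQm)).aemeasurable

section SmoothPoincare

variable {E G : Type*} [NormedAddCommGroup E] [NormedSpace ℝ E]
  [NormedAddCommGroup G] [NormedSpace ℝ G] [CompleteSpace G] {F : E → G}

lemma enorm_sub_sq_le_lintegral_fderiv (hF : ContDiff ℝ 1 F) (x h : E) :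
    ‖F (x + h) - F x‖ₑ ^ 2 ≤ ‖h‖ₑ ^ 2 * ∫⁻ t in Ioc (0 : ℝ) 1, ‖fderiv ℝ F (x + t • h)‖ₑ ^ 2 := by
  have hcont : Continuous fun t : ℝ => fderiv ℝ F (x + t • h) :=
    (hF.continuous_fderiv one_ne_zero).comp (by fun_prop)
  have hderiv (t : ℝ) : HasDerivAt (fun t : ℝ => F (x + t • h)) (fderiv ℝ F (x + t • h) h) t :=
    (hF.differentiable one_ne_zero _).hasFDerivAt.comp_hasDerivAt t
      (by simpa using ((hasDerivAt_id t).smul_const h).const_add x)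
  have hftc : F (x + h) - F x = ∫ t in Ioc (0 : ℝ) 1, fderiv ℝ F (x + t • h) h := by
    rw [← intervalIntegral.integral_of_le zero_le_one,
      intervalIntegral.integral_eq_sub_of_hasDerivAt (fun t _ => hderiv t)
        ((hcont.clm_apply continuous_const).intervalIntegrable 0 1)]
    simp
  have hle : ‖F (x + h) - F x‖ₑ ≤
      ∫⁻ t in Ioc (0 : ℝ) 1, 1 * (‖fderiv ℝ F (x + t • h)‖ₑ * ‖h‖ₑ) := by
    rw [hftc]
    refine (enorm_integral_le_lintegral_enorm _).trans (lintegral_mono fun t => ?_)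
    rw [one_mul]
    exact ContinuousLinearMap.le_opENorm _ _
  calc ‖F (x + h) - F x‖ₑ ^ 2
      ≤ (∫⁻ t in Ioc (0 : ℝ) 1, 1 * (‖fderiv ℝ F (x + t • h)‖ₑ * ‖h‖ₑ)) ^ 2 := by gcongr
    _ ≤ ∫⁻ t in Ioc (0 : ℝ) 1, 1 * (‖fderiv ℝ F (x + t • h)‖ₑ * ‖h‖ₑ) ^ 2 :=
        sq_lintegral_mul_le aemeasurable_const (by fun_prop) (by simp)
    _ = ‖h‖ₑ ^ 2 * ∫⁻ t in Ioc (0 : ℝ) 1, ‖fderiv ℝ F (x + t • h)‖ₑ ^ 2 := by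
        simp_rw [one_mul, mul_pow, mul_comm _ (‖h‖ₑ ^ 2)]
        exact lintegral_const_mul' _ _ (by simp)

variable [MeasurableSpace E] [BorelSpace E] [SecondCountableTopology E] {μ : Measure E}
  [SFinite μ] {Q : Set E}

lemma setLIntegral_enorm_translate_sub_sq_le [μ.IsAddRightInvariant] (hF : ContDiff ℝ 1 F)
    (hQ : Convex ℝ Q) (hQm : MeasurableSet Q) (h : E) :
    ∫⁻ x in Q ∩ (· + h) ⁻¹' Q, ‖F (x + h) - F x‖ₑ ^ 2 ∂μ ≤
      ‖h‖ₑ ^ 2 * ∫⁻ z in Q, ‖fderiv ℝ F z‖ₑ ^ 2 ∂μ := by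
  set w := Q.indicator fun z => ‖fderiv ℝ F z‖ₑ ^ 2 with hw
  have hwm : Measurable w :=
    ((hF.continuous_fderiv one_ne_zero).enorm.measurable.pow_const 2).indicator hQm
  calc ∫⁻ x in Q ∩ (· + h) ⁻¹' Q, ‖F (x + h) - F x‖ₑ ^ 2 ∂μ
      ≤ ∫⁻ x in Q ∩ (· + h) ⁻¹' Q, ‖h‖ₑ ^ 2 * (∫⁻ t in Ioc (0 : ℝ) 1, w (x + t • h)) ∂μ := by
        refine setLIntegral_mono' (hQm.inter (measurable_add_const h hQm)) fun x hx => ?_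
        refine (enorm_sub_sq_le_lintegral_fderiv hF x h).trans ?_
        gcongr ‖h‖ₑ ^ 2 * ?_
        refine setLIntegral_mono' measurableSet_Ioc fun t ht => ?_
        rw [hw, indicator_of_mem (hQ.add_smul_mem hx.1 hx.2 (Ioc_subset_Icc_self ht))]
    _ ≤ ∫⁻ x, ‖h‖ₑ ^ 2 * (∫⁻ t in Ioc (0 : ℝ) 1, w (x + t • h)) ∂μ := setLIntegral_le_lintegral _ _
    _ = ‖h‖ₑ ^ 2 * ∫⁻ t in Ioc (0 : ℝ) 1, ∫⁻ x, w (x + t • h) ∂μ := by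
        rw [lintegral_const_mul' _ _ (by simp), lintegral_lintegral_swap]
        exact (hwm.comp (by fun_prop : Measurable fun q : E × ℝ => q.1 + q.2 • h)).aemeasurable
    _ = ‖h‖ₑ ^ 2 * ∫⁻ z in Q, ‖fderiv ℝ F z‖ₑ ^ 2 ∂μ := by
        simp_rw [lintegral_add_right_eq_self w, hw, lintegral_indicator hQm]
        simp

open scoped Pointwise in
lemma lintegral_lintegral_enorm_sub_sq_le [μ.IsAddLeftInvariant] (hF : ContDiff ℝ 1 F)
    (hQ : Convex ℝ Q) (hQm : MeasurableSet Q) :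
    ∫⁻ x in Q, ∫⁻ y in Q, ‖F y - F x‖ₑ ^ 2 ∂μ ∂μ ≤
      ediam Q ^ 2 * (∫⁻ z in Q, ‖fderiv ℝ F z‖ₑ ^ 2 ∂μ) * μ (Q - Q) := by
  have hFc := hF.continuous
  have hk : Measurable (Function.uncurry fun x y => ‖F y - F x‖ₑ ^ 2) := by
    unfold Function.uncurry
    exact (Continuous.enorm (by fun_prop)).measurable.pow_const 2
  rw [setLIntegral_setLIntegral_eq_lintegral_translate hQm hk]
  refine (lintegral_mono fun h => ?_).trans (lintegral_indicator_const_le (Q - Q) _)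
  rcases (Q ∩ (· + h) ⁻¹' Q).eq_empty_or_nonempty with hempty | ⟨x, hx, hxh⟩
  · simp [hempty]
  have hmem : h ∈ Q - Q := ⟨x + h, hxh, x, hx, by simp⟩
  have hdiam : ‖h‖ₑ ≤ ediam Q := by
    simpa [edist_eq_enorm_sub] using edist_le_ediam_of_mem (s := Q) hxh hx
  rw [indicator_of_mem hmem]
  exact (setLIntegral_enorm_translate_sub_sq_le hF hQ hQm h).trans (by gcongr)

end SmoothPoincare

/-! ### Weak derivatives and mollification -/

section Partial

variable {d : ℕ}

lemma enorm_sq_eq_sum_enorm_sq {ι : Type*} [Fintype ι] (ξ : EuclideanSpace ℝ ι) :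
    ‖ξ‖ₑ ^ 2 = ∑ k, ‖ξ k‖ₑ ^ 2 := by
  simp_rw [← ofReal_norm, ← ENNReal.ofReal_pow (norm_nonneg _), EuclideanSpace.norm_sq_eq]
  exact ENNReal.ofReal_sum_of_nonneg fun _ _ => by positivity

lemma continuous_pder {F : Ed d → ℝ} (hF : ContDiff ℝ 1 F) (i : Fin d) : Continuous (pder F i) :=
  (hF.continuous_fderiv one_ne_zero).clm_apply continuous_const

lemma pder_eq_zero_of_notMem_tsupport {φ : Ed d → ℝ} {x : Ed d} (hx : x ∉ tsupport φ) (i : Fin d) :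
    pder φ i x = 0 := by
  rw [pder, fderiv_of_notMem_tsupport ℝ hx, zero_apply]

lemma pder_comp_add_smul {φ : Ed d → ℝ} (hφ : Differentiable ℝ φ) (a : Ed d) (s : ℝ) (i : Fin d)
    (y : Ed d) : pder (fun y => φ (a + s • y)) i y = s * pder φ i (a + s • y) := by
  have hinner : HasFDerivAt (fun y : Ed d => a + s • y) (s • ContinuousLinearMap.id ℝ (Ed d)) y :=
    ((hasFDerivAt_id y).const_smul s).const_add a
  have hcomp : HasFDerivAt (fun y => φ (a + s • y)) _ y := (hφ _).hasFDerivAt.comp y hinner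
  rw [pder, hcomp.fderiv]
  simp [pder]

lemma enorm_fderiv_sq_le_sum_pder (F : Ed d → ℝ) (z : Ed d) :
    ‖fderiv ℝ F z‖ₑ ^ 2 ≤ ∑ i, ‖pder F i z‖ₑ ^ 2 := by
  set ξ : Ed d := WithLp.toLp 2 fun i => pder F i z with hξ
  have happly (h : Ed d) : fderiv ℝ F z h = ⟪ξ, h⟫ := by
    have hsum : h = ∑ i, h i • (EuclideanSpace.single i (1 : ℝ) : Ed d) := by
      ext j
      simp [Pi.single_apply]
    conv_lhs => rw [hsum]
    simp [hξ, pder, PiLp.inner_apply]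
  have hle : ‖fderiv ℝ F z‖ ≤ ‖ξ‖ :=
    ContinuousLinearMap.opNorm_le_bound _ (norm_nonneg ξ) fun h => by
      rw [happly]
      exact norm_inner_le_norm ξ h
  calc ‖fderiv ℝ F z‖ₑ ^ 2 ≤ ‖ξ‖ₑ ^ 2 := by gcongr; exact enorm_le_iff_norm_le.2 hle
    _ = ∑ i, ‖pder F i z‖ₑ ^ 2 := enorm_sq_eq_sum_enorm_sq ξ

end Partial

section WeakDerivative

variable {d : ℕ} {U : Set (Ed d)}

/-- `w` is the weak `i`-th partial derivative of the scalar function `f` on `U`. These are the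
component equations of `IsWeakGrad`. -/
def HasWeakPDeriv (U : Set (Ed d)) (f w : Ed d → ℝ) (i : Fin d) : Prop :=
  ∀ φ : Ed d → ℝ, ContDiff ℝ (⊤ : ℕ∞) φ → HasCompactSupport φ → tsupport φ ⊆ U →
    ∫ x in U, f x * pder φ i x = - ∫ x in U, w x * φ x

variable {ι : Type} [Fintype ι] {f f' : Ed d → EuclideanSpace ℝ ι}
  {g : Ed d → EuclideanSpace ℝ (ι × Fin d)}

lemma IsWeakGrad.hasWeakPDeriv (h : IsWeakGrad U f g) (a : ι) (i : Fin d) :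
    HasWeakPDeriv U (fun x => f x a) (fun x => g x (a, i)) i :=
  fun φ hφ hφc hφU => h φ hφ hφc hφU a i

lemma IsWeakGrad.mono {V : Set (Ed d)} (h : IsWeakGrad U f g) (hU : MeasurableSet U)
    (hVU : V ⊆ U) : IsWeakGrad V f g := by
  intro φ hφ hφc hφV a i
  have hoff (x : Ed d) (hx : x ∈ U \ V) : x ∉ tsupport φ := fun hxφ => hx.2 (hφV hxφ)
  rw [← setIntegral_eq_of_subset_of_forall_sdiff_eq_zero hU hVU fun x hx => by
      rw [pder_eq_zero_of_notMem_tsupport (hoff x hx), mul_zero],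
    ← setIntegral_eq_of_subset_of_forall_sdiff_eq_zero hU hVU fun x hx => by
      rw [image_eq_zero_of_notMem_tsupport (hoff x hx), mul_zero]]
  exact h φ hφ hφc (hφV.trans hVU) a i

lemma IsWeakGrad.congr_ae (h : IsWeakGrad U f g) (hff' : f =ᵐ[volume.restrict U] f') :
    IsWeakGrad U f' g := by
  intro φ hφ hφc hφU a i
  rw [← h φ hφ hφc hφU a i]
  refine integral_congr_ae ?_
  filter_upwards [hff'] with x hx
  rw [hx]

end WeakDerivative

section Mollification

open scoped Convolution

variable {d : ℕ} {U Q : Set (Ed d)} {f w : Ed d → ℝ} {i : Fin d} {x : Ed d}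

/-- The mollification of `f` by the normalised bump function `b`. -/
def mollify (b : ContDiffBump (0 : Ed d)) (f : Ed d → ℝ) : Ed d → ℝ :=
  b.normed volume ⋆[ContinuousLinearMap.lsmul ℝ ℝ, volume] f

lemma contDiff_mollify (b : ContDiffBump (0 : Ed d)) (hf : LocallyIntegrable f) :
    ContDiff ℝ 1 (mollify b f) :=
  b.hasCompactSupport_normed.contDiff_convolution_left (n := 1) _ b.contDiff_normed hf

lemma exists_seq_mollify_tendsto {δ : ℝ} (hδ : 0 < δ) (hf : LocallyIntegrable f) :
    ∃ b : ℕ → ContDiffBump (0 : Ed d), (∀ n, (b n).rOut ≤ δ) ∧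
      ∀ᵐ x, Tendsto (fun n => mollify (b n) f x) atTop (𝓝 (f x)) := by
  let b : ℕ → ContDiffBump (0 : Ed d) := fun n =>
    ⟨δ * (1 / (n + 1)) / 2, δ * (1 / (n + 1)), by positivity, half_lt_self (by positivity)⟩
  have hlim : Tendsto (fun n => (b n).rOut) atTop (𝓝 0) := by
    simpa only [mul_zero] using tendsto_one_div_add_atTop_nhds_zero_nat.const_mul δ
  refine ⟨b, fun n => ?_, ?_⟩
  · exact mul_le_of_le_one_right hδ.le (div_le_one_of_le₀ (by simp) (by positivity))
  · exact ContDiffBump.ae_convolution_tendsto_right_of_locallyIntegrable (K := 2) hlim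
      (.of_forall fun n => (mul_div_cancel₀ _ two_ne_zero).ge) hf

lemma lintegral_ofReal_normed (b : ContDiffBump (0 : Ed d)) :
    ∫⁻ y, ENNReal.ofReal (b.normed volume y) = 1 := by
  rw [← ofReal_integral_eq_lintegral_ofReal b.integrable_normed (ae_of_all _ b.nonneg_normed),
    b.integral_normed, ENNReal.ofReal_one]

lemma pder_mollify_eq_integral (b : ContDiffBump (0 : Ed d)) (hf : LocallyIntegrable f)
    (i : Fin d) (x : Ed d) :
    pder (mollify b f) i x = ∫ y, pder (b.normed volume) i (x - y) * f y := by
  have hderiv := b.hasCompactSupport_normed.hasFDerivAt_convolution_left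
    (ContinuousLinearMap.lsmul ℝ ℝ) (b.contDiff_normed (μ := volume)) hf x
  rw [pder, mollify, hderiv.fderiv, convolution_eq_swap, ContinuousLinearMap.integral_apply]
  · rfl
  · exact (((b.hasCompactSupport_normed.fderiv ℝ).convolutionExists_left _
      (b.contDiff_normed.continuous_fderiv one_ne_zero) hf) x).integrable_swap

lemma tsupport_normed_const_sub_subset (b : ContDiffBump (0 : Ed d)) (x : Ed d) :
    tsupport (fun y => b.normed volume (x - y)) ⊆ closedBall x b.rOut := by
  refine closure_minimal (fun y hy => ?_) isClosed_closedBall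
  have hmem : x - y ∈ closedBall 0 b.rOut := by
    rw [← b.tsupport_normed_eq (μ := volume)]
    exact subset_tsupport _ hy
  simpa [dist_eq_norm, norm_sub_rev] using hmem

lemma HasWeakPDeriv.pder_mollify (hw : HasWeakPDeriv U f w i) (hU : MeasurableSet U)
    (hf : IntegrableOn f U) {b : ContDiffBump (0 : Ed d)} (hx : closedBall x b.rOut ⊆ U) :
    pder (mollify b (U.indicator f)) i x = ∫ y in U, w y * b.normed volume (x - y) := by
  set φ : Ed d → ℝ := fun y => b.normed volume (x - y)
  have hφs : ContDiff ℝ (⊤ : ℕ∞) φ := b.contDiff_normed.comp (contDiff_const.sub contDiff_id)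
  have hφt : tsupport φ ⊆ closedBall x b.rOut := tsupport_normed_const_sub_subset b x
  have hφc : HasCompactSupport φ :=
    (isCompact_closedBall x b.rOut).of_isClosed_subset (isClosed_tsupport _) hφt
  have hpder (y : Ed d) : pder (b.normed volume) i (x - y) = - pder φ i y := by
    have hρ : Differentiable ℝ (b.normed volume) :=
      (b.contDiff_normed (n := 1)).differentiable one_ne_zero
    simpa [← sub_eq_add_neg, neg_eq_iff_eq_neg] using (pder_comp_add_smul hρ x (-1) i y).symm
  calc pder (mollify b (U.indicator f)) i x
      = ∫ y, U.indicator (fun y => pder (b.normed volume) i (x - y) * f y) y := by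
        rw [pder_mollify_eq_integral b ((integrable_indicator_iff hU).2 hf).locallyIntegrable]
        simp_rw [indicator_mul_right]
    _ = - ∫ y in U, f y * pder φ i y := by
        rw [integral_indicator hU, ← integral_neg]
        simp_rw [hpder, neg_mul, mul_comm (f _)]
    _ = ∫ y in U, w y * φ y := by rw [hw φ hφs hφc (hφt.trans hx), neg_neg]

lemma HasWeakPDeriv.enorm_pder_mollify_sq_le (hw : HasWeakPDeriv U f w i) (hU : MeasurableSet U)
    (hf : IntegrableOn f U) (hwm : AEStronglyMeasurable w (volume.restrict U))
    {b : ContDiffBump (0 : Ed d)} (hx : closedBall x b.rOut ⊆ U) :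
    ‖pder (mollify b (U.indicator f)) i x‖ₑ ^ 2 ≤
      ∫⁻ y in U, ENNReal.ofReal (b.normed volume (x - y)) * ‖w y‖ₑ ^ 2 := by
  have hρm : Measurable fun y => ENNReal.ofReal (b.normed volume (x - y)) :=
    (b.continuous_normed.comp (continuous_const.sub continuous_id)).measurable.ennreal_ofReal
  have hρ1 : ∫⁻ y in U, ENNReal.ofReal (b.normed volume (x - y)) ≤ 1 := by
    refine (setLIntegral_le_lintegral _ _).trans_eq ?_
    rw [lintegral_sub_left_eq_self (fun y => ENNReal.ofReal (b.normed volume y)) x,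
      lintegral_ofReal_normed]
  refine le_trans ?_ (sq_lintegral_mul_le hρm.aemeasurable hwm.enorm hρ1)
  gcongr
  rw [hw.pder_mollify hU hf hx]
  refine (enorm_integral_le_lintegral_enorm _).trans_eq (lintegral_congr fun y => ?_)
  rw [enorm_mul, mul_comm, Real.enorm_of_nonneg (b.nonneg_normed _)]

lemma HasWeakPDeriv.setLIntegral_pder_mollify_sq_le (hw : HasWeakPDeriv U f w i)
    (hU : MeasurableSet U) (hQ : MeasurableSet Q) (hf : IntegrableOn f U)
    (hwm : AEStronglyMeasurable w (volume.restrict U)) {b : ContDiffBump (0 : Ed d)}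
    (hQU : ∀ x ∈ Q, closedBall x b.rOut ⊆ U) :
    ∫⁻ x in Q, ‖pder (mollify b (U.indicator f)) i x‖ₑ ^ 2 ≤ ∫⁻ y in U, ‖w y‖ₑ ^ 2 := by
  have hρm : Measurable fun q : Ed d × Ed d => ENNReal.ofReal (b.normed volume (q.1 - q.2)) :=
    (b.continuous_normed.comp (continuous_fst.sub continuous_snd)).measurable.ennreal_ofReal
  have hρy (y : Ed d) : Measurable fun x => ENNReal.ofReal (b.normed volume (x - y)) :=
    (b.continuous_normed.comp (continuous_id.sub continuous_const)).measurable.ennreal_ofReal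
  have hρ1 (y : Ed d) : ∫⁻ x in Q, ENNReal.ofReal (b.normed volume (x - y)) ≤ 1 := by
    refine (setLIntegral_le_lintegral _ _).trans_eq ?_
    rw [lintegral_sub_right_eq_self (fun x => ENNReal.ofReal (b.normed volume x)) y,
      lintegral_ofReal_normed]
  calc ∫⁻ x in Q, ‖pder (mollify b (U.indicator f)) i x‖ₑ ^ 2
      ≤ ∫⁻ x in Q, ∫⁻ y in U, ENNReal.ofReal (b.normed volume (x - y)) * ‖w y‖ₑ ^ 2 :=
        setLIntegral_mono' hQ fun x hx => hw.enorm_pder_mollify_sq_le hU hf hwm (hQU x hx)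
    _ = ∫⁻ y in U, ∫⁻ x in Q, ENNReal.ofReal (b.normed volume (x - y)) * ‖w y‖ₑ ^ 2 := by
        rw [lintegral_lintegral_swap]
        exact hρm.aemeasurable.mul (hwm.enorm.pow_const 2).comp_snd
    _ = ∫⁻ y in U, (∫⁻ x in Q, ENNReal.ofReal (b.normed volume (x - y))) * ‖w y‖ₑ ^ 2 :=
        lintegral_congr fun y => lintegral_mul_const _ (hρy y)
    _ ≤ ∫⁻ y in U, ‖w y‖ₑ ^ 2 := lintegral_mono fun y => mul_le_of_le_one_left' (hρ1 y)

lemma setLIntegral_fderiv_mollify_sq_le {w : Fin d → Ed d → ℝ}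
    (hw : ∀ i, HasWeakPDeriv U f (w i) i) (hU : MeasurableSet U) (hQ : MeasurableSet Q)
    (hf : IntegrableOn f U) (hwm : ∀ i, AEStronglyMeasurable (w i) (volume.restrict U))
    {b : ContDiffBump (0 : Ed d)} (hQU : ∀ x ∈ Q, closedBall x b.rOut ⊆ U) :
    ∫⁻ x in Q, ‖fderiv ℝ (mollify b (U.indicator f)) x‖ₑ ^ 2 ≤
      ∫⁻ y in U, ∑ i, ‖w i y‖ₑ ^ 2 := by
  have hF := contDiff_mollify b ((integrable_indicator_iff hU).2 hf).locallyIntegrable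
  rw [lintegral_finsetSum' _ fun i _ => (hwm i).enorm.pow_const 2]
  calc ∫⁻ x in Q, ‖fderiv ℝ (mollify b (U.indicator f)) x‖ₑ ^ 2
      ≤ ∫⁻ x in Q, ∑ i, ‖pder (mollify b (U.indicator f)) i x‖ₑ ^ 2 :=
        lintegral_mono fun x => enorm_fderiv_sq_le_sum_pder _ x
    _ = ∑ i, ∫⁻ x in Q, ‖pder (mollify b (U.indicator f)) i x‖ₑ ^ 2 :=
        lintegral_finsetSum _ fun i _ => (continuous_pder hF i).enorm.measurable.pow_const 2
    _ ≤ ∑ i, ∫⁻ y in U, ‖w i y‖ₑ ^ 2 := Finset.sum_le_sum fun i _ =>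
        (hw i).setLIntegral_pder_mollify_sq_le hU hQ hf (hwm i) hQU

end Mollification

/-! ### The Poincaré inequality for weakly differentiable functions -/

lemma lintegral_lintegral_enorm_sub_sq_le_of_tendsto {X : Type*} [MeasurableSpace X]
    {μ : Measure X} [SFinite μ] {F : ℕ → X → ℝ} {f : X → ℝ} {B : ℝ≥0∞}
    (hF : ∀ n, Measurable (F n)) (hlim : ∀ᵐ x ∂μ, Tendsto (fun n => F n x) atTop (𝓝 (f x)))
    (hB : ∀ n, ∫⁻ x, ∫⁻ y, ‖F n y - F n x‖ₑ ^ 2 ∂μ ∂μ ≤ B) :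
    ∫⁻ x, ∫⁻ y, ‖f y - f x‖ₑ ^ 2 ∂μ ∂μ ≤ B := by
  have hm (n : ℕ) : Measurable fun q : X × X => ‖F n q.2 - F n q.1‖ₑ ^ 2 :=
    (((hF n).comp measurable_snd).sub ((hF n).comp measurable_fst)).enorm.pow_const 2
  calc ∫⁻ x, ∫⁻ y, ‖f y - f x‖ₑ ^ 2 ∂μ ∂μ
      = ∫⁻ x, ∫⁻ y, liminf (fun n => ‖F n y - F n x‖ₑ ^ 2) atTop ∂μ ∂μ := by
        refine lintegral_congr_ae ?_
        filter_upwards [hlim] with x hx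
        refine lintegral_congr_ae ?_
        filter_upwards [hlim] with y hy
        exact (ENNReal.Tendsto.pow (hy.sub hx).enorm).liminf_eq.symm
    _ ≤ ∫⁻ x, liminf (fun n => ∫⁻ y, ‖F n y - F n x‖ₑ ^ 2 ∂μ) atTop ∂μ :=
        lintegral_mono fun x => lintegral_liminf_le fun n => (hm n).comp measurable_prodMk_left
    _ ≤ liminf (fun n => ∫⁻ x, ∫⁻ y, ‖F n y - F n x‖ₑ ^ 2 ∂μ ∂μ) atTop :=
        lintegral_liminf_le fun n => (hm n).lintegral_prod_right'
    _ ≤ liminf (fun _ : ℕ => B) atTop := liminf_le_liminf (.of_forall hB)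
    _ = B := liminf_const B

section WeakPoincare

open scoped Pointwise

variable {d : ℕ} {U Q : Set (Ed d)} {δ : ℝ}

lemma lintegral_lintegral_enorm_sub_sq_le_of_hasWeakPDeriv {f : Ed d → ℝ} {w : Fin d → Ed d → ℝ}
    (hw : ∀ i, HasWeakPDeriv U f (w i) i) (hU : MeasurableSet U) (hQ : Convex ℝ Q)
    (hQm : MeasurableSet Q) (hδ : 0 < δ) (hQU : ∀ x ∈ Q, closedBall x δ ⊆ U)
    (hf : IntegrableOn f U) (hwm : ∀ i, AEStronglyMeasurable (w i) (volume.restrict U)) :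
    ∫⁻ x in Q, ∫⁻ y in Q, ‖f y - f x‖ₑ ^ 2 ≤
      ediam Q ^ 2 * (∫⁻ z in U, ∑ i, ‖w i z‖ₑ ^ 2) * volume (Q - Q) := by
  have hloc := ((integrable_indicator_iff hU).2 hf).locallyIntegrable
  obtain ⟨b, hb, hlim⟩ := exists_seq_mollify_tendsto hδ hloc
  refine lintegral_lintegral_enorm_sub_sq_le_of_tendsto
    (F := fun n => mollify (b n) (U.indicator f)) (μ := volume.restrict Q)
    (fun n => (contDiff_mollify (b n) hloc).continuous.measurable) ?_ fun n => ?_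
  · filter_upwards [ae_restrict_of_ae hlim, ae_restrict_mem hQm] with x hx hxQ
    rwa [indicator_of_mem (hQU x hxQ (mem_closedBall_self hδ.le))] at hx
  · refine (lintegral_lintegral_enorm_sub_sq_le (contDiff_mollify (b n) hloc) hQ hQm).trans ?_
    gcongr ediam Q ^ 2 * ?_ * volume (Q - Q)
    exact setLIntegral_fderiv_mollify_sq_le hw hU hQm hf hwm fun x hx =>
      (closedBall_subset_closedBall (hb n)).trans (hQU x hx)

lemma lintegral_lintegral_enorm_sub_sq_eq_sum {X : Type*} [MeasurableSpace X] {μ : Measure X}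
    [SFinite μ] {ι : Type*} [Fintype ι] {f : X → EuclideanSpace ℝ ι} (hf : AEMeasurable f μ) :
    ∫⁻ x, ∫⁻ y, ‖f y - f x‖ₑ ^ 2 ∂μ ∂μ = ∑ a, ∫⁻ x, ∫⁻ y, ‖f y a - f x a‖ₑ ^ 2 ∂μ ∂μ := by
  have hfa (a : ι) : AEMeasurable (fun x => f x a) μ :=
    (EuclideanSpace.proj (𝕜 := ℝ) a).measurable.comp_aemeasurable hf
  rw [← lintegral_finsetSum' _ fun a _ => AEMeasurable.lintegral_prod_right'
    (f := fun q : X × X => ‖f q.2 a - f q.1 a‖ₑ ^ 2)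
    (((hfa a).comp_snd.sub (hfa a).comp_fst).enorm.pow_const 2)]
  refine lintegral_congr fun x => ?_
  rw [← lintegral_finsetSum' _ fun a _ => ((hfa a).sub_const (f x a)).enorm.pow_const 2]
  simp_rw [enorm_sq_eq_sum_enorm_sq, PiLp.sub_apply]

variable {ι : Type} [Fintype ι] {f : Ed d → EuclideanSpace ℝ ι}
  {W : Ed d → EuclideanSpace ℝ (ι × Fin d)}

lemma IsWeakGrad.lintegral_lintegral_enorm_sub_sq_le (hW : IsWeakGrad U f W)
    (hU : MeasurableSet U) (hQ : Convex ℝ Q) (hQm : MeasurableSet Q) (hδ : 0 < δ)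
    (hQU : ∀ x ∈ Q, closedBall x δ ⊆ U) (hf : IntegrableOn f U)
    (hWm : AEStronglyMeasurable W (volume.restrict U)) :
    ∫⁻ x in Q, ∫⁻ y in Q, ‖f y - f x‖ₑ ^ 2 ≤
      ediam Q ^ 2 * (∫⁻ z in U, ‖W z‖ₑ ^ 2) * volume (Q - Q) := by
  have hWk (k : ι × Fin d) : AEStronglyMeasurable (fun z => W z k) (volume.restrict U) :=
    (EuclideanSpace.proj (𝕜 := ℝ) k).continuous.comp_aestronglyMeasurable hWm
  have hsum : ∫⁻ z in U, ‖W z‖ₑ ^ 2 = ∑ a, ∫⁻ z in U, ∑ i, ‖W z (a, i)‖ₑ ^ 2 := by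
    simp_rw [enorm_sq_eq_sum_enorm_sq, Fintype.sum_prod_type]
    exact lintegral_finsetSum' _ fun a _ =>
      Finset.aemeasurable_fun_sum _ fun i _ => (hWk (a, i)).enorm.pow_const 2
  have hQsub : Q ⊆ U := fun x hx => hQU x hx (mem_closedBall_self hδ.le)
  rw [lintegral_lintegral_enorm_sub_sq_eq_sum (hf.mono_set hQsub).aemeasurable, hsum,
    Finset.mul_sum, Finset.sum_mul]
  refine Finset.sum_le_sum fun a _ => ?_
  exact lintegral_lintegral_enorm_sub_sq_le_of_hasWeakPDeriv (hW.hasWeakPDeriv a) hU hQ hQm hδ hQU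
    ((EuclideanSpace.proj (𝕜 := ℝ) a).integrable_comp hf) fun i => hWk (a, i)

lemma IsWeakGrad.lintegral_lintegral_cube_enorm_sub_sq_le {z : Ed d} {r : ℝ}
    (hW : IsWeakGrad (cube z (2 * r)) f W) (hr : 0 < r) (hf : IntegrableOn f (cube z (2 * r)))
    (hWm : AEStronglyMeasurable W (volume.restrict (cube z (2 * r)))) :
    ∫⁻ x in cube z r, ∫⁻ y in cube z r, ‖f y - f x‖ₑ ^ 2 ≤
      ENNReal.ofReal (d * r ^ 2 * (2 * r) ^ d) * ∫⁻ x in cube z (2 * r), ‖W x‖ₑ ^ 2 := by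
  have hdiam : ediam (cube z r) ≤ ENNReal.ofReal (√d * r) := ediam_le fun x hx y hy => by
    rw [edist_dist, dist_eq_norm]
    exact ENNReal.ofReal_le_ofReal (norm_sub_le_of_mem_cube hx hy)
  have hdiff : volume (cube z r - cube z r) ≤ ENNReal.ofReal ((2 * r) ^ d) := by
    rw [← volume_cube (0 : Ed d) (by positivity)]
    exact measure_mono (sub_subset_iff.2 fun x hx y hy => sub_mem_cube_zero hx hy)
  calc ∫⁻ x in cube z r, ∫⁻ y in cube z r, ‖f y - f x‖ₑ ^ 2
      ≤ ediam (cube z r) ^ 2 * (∫⁻ x in cube z (2 * r), ‖W x‖ₑ ^ 2) *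
          volume (cube z r - cube z r) :=
        hW.lintegral_lintegral_enorm_sub_sq_le (measurableSet_cube _ _) (convex_cube z r)
          (measurableSet_cube z r) (half_pos hr)
          (fun x hx => closedBall_subset_cube hx (by linarith)) hf hWm
    _ ≤ ENNReal.ofReal (√d * r) ^ 2 * (∫⁻ x in cube z (2 * r), ‖W x‖ₑ ^ 2) *
          ENNReal.ofReal ((2 * r) ^ d) := by gcongr
    _ = _ := by
        rw [mul_right_comm, ← ENNReal.ofReal_pow (by positivity),
          ← ENNReal.ofReal_mul (by positivity), mul_pow, Real.sq_sqrt (by simp)]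

end WeakPoincare

/-! ### The map `V` -/

section V

variable {p : ℝ} {ι : Type} [Fintype ι]

lemma norm_Vm (hp : p ≠ 0) (η : EuclideanSpace ℝ ι) : ‖Vm p η‖ = ‖η‖ ^ (p / 2) := by
  rw [Vm, norm_smul, Real.norm_of_nonneg (by positivity)]
  rcases eq_or_ne ‖η‖ 0 with h | h
  · rw [h, mul_zero, Real.zero_rpow (div_ne_zero hp two_ne_zero)]
  · rw [← Real.rpow_add_one h]
    congr 1
    ring

lemma norm_Vm_sq (hp : p ≠ 0) (η : EuclideanSpace ℝ ι) : ‖Vm p η‖ ^ 2 = ‖η‖ ^ p := by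
  rw [norm_Vm hp, ← Real.rpow_mul_natCast (norm_nonneg η), Nat.cast_two,
    div_mul_cancel₀ p two_ne_zero]

lemma enorm_Vm_sq (hp : p ≠ 0) (η : EuclideanSpace ℝ ι) :
    ‖Vm p η‖ₑ ^ 2 = ENNReal.ofReal (‖η‖ ^ p) := by
  rw [← ofReal_norm, ← ENNReal.ofReal_pow (norm_nonneg _), norm_Vm_sq hp]

lemma measurable_Vm (p : ℝ) : Measurable (Vm p : EuclideanSpace ℝ ι → EuclideanSpace ℝ ι) :=
  (measurable_norm.pow_const _).smul measurable_id

lemma aestronglyMeasurable_Vm {X : Type*} [MeasurableSpace X] {μ : Measure X}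
    {g : X → EuclideanSpace ℝ ι} (hg : AEStronglyMeasurable g μ) :
    AEStronglyMeasurable (fun x => Vm p (g x)) μ :=
  ((measurable_Vm p).comp_aemeasurable hg.aemeasurable).aestronglyMeasurable

lemma memLp_two_Vm (hp : 0 < p) {X : Type*} [MeasurableSpace X] {μ : Measure X}
    {g : X → EuclideanSpace ℝ ι} (hg : MemLp g (ENNReal.ofReal p) μ) :
    MemLp (fun x => Vm p (g x)) 2 μ := by
  rw [memLp_two_iff_integrable_sq_norm (aestronglyMeasurable_Vm hg.1)]
  simp_rw [norm_Vm_sq hp.ne']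
  simpa only [ENNReal.toReal_ofReal hp.le] using
    hg.integrable_norm_rpow (by simpa using hp) ENNReal.ofReal_ne_top

lemma abs_rpow_sub_rpow_mul_le {a b s : ℝ} (hb : 0 < b) (hba : b ≤ a) (hs : 1 / 2 ≤ s) :
    |a ^ (s - 1) - b ^ (s - 1)| * b ≤ a ^ s - b ^ s := by
  have ha : 0 < a := hb.trans_le hba
  have hbs : b ^ (s - 1) * b = b ^ s := by rw [← Real.rpow_add_one hb.ne', sub_add_cancel]
  have has : a ^ (s - 1) * a = a ^ s := by rw [← Real.rpow_add_one ha.ne', sub_add_cancel]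
  rcases le_total (b ^ (s - 1)) (a ^ (s - 1)) with h | h
  · rw [abs_of_nonneg (sub_nonneg.2 h), sub_mul, hbs, ← has]
    gcongr
  · have hAMGM : 2 * (√a * √b) ≤ a + b := by
      nlinarith [sq_nonneg (√a - √b), Real.sq_sqrt ha.le, Real.sq_sqrt hb.le]
    have hbs_le : b ^ s ≤ a ^ (s - 1) * (√a * √b) := calc
      b ^ s = b ^ (s - 1 / 2) * √b := by
        rw [Real.sqrt_eq_rpow, ← Real.rpow_add hb, sub_add_cancel]
      _ ≤ a ^ (s - 1 / 2) * √b := by gcongr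
      _ = a ^ (s - 1) * (√a * √b) := by
        rw [Real.sqrt_eq_rpow a, ← mul_assoc, ← Real.rpow_add ha]
        congr 2
        ring
    have htwice : 2 * b ^ s ≤ a ^ (s - 1) * (a + b) := by
      nlinarith [Real.rpow_pos_of_pos ha (s - 1)]
    rw [abs_of_nonpos (sub_nonpos.2 h), neg_sub, sub_mul, hbs, ← has]
    linarith

lemma max_rpow_mul_norm_sub_le (hp : 1 ≤ p) (A B : EuclideanSpace ℝ ι) :
    max ‖A‖ ‖B‖ ^ ((p - 2) / 2) * ‖A - B‖ ≤ 2 * ‖Vm p A - Vm p B‖ := by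
  wlog hBA : ‖B‖ ≤ ‖A‖ generalizing A B
  · simpa only [max_comm, norm_sub_rev] using this B A (le_of_not_ge hBA)
  have hp0 : p ≠ 0 := by linarith
  have hexp : (p - 2) / 2 = p / 2 - 1 := by ring
  have hscalar : |‖A‖ ^ ((p - 2) / 2) - ‖B‖ ^ ((p - 2) / 2)| * ‖B‖ ≤ ‖Vm p A‖ - ‖Vm p B‖ := by
    rw [norm_Vm hp0, norm_Vm hp0, hexp]
    rcases (norm_nonneg B).eq_or_lt with hB | hB
    · rw [← hB, Real.zero_rpow (div_ne_zero hp0 two_ne_zero), mul_zero, sub_zero]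
      positivity
    · exact abs_rpow_sub_rpow_mul_le hB hBA (by linarith)
  have hsplit : ‖A‖ ^ ((p - 2) / 2) • (A - B) =
      (Vm p A - Vm p B) - (‖A‖ ^ ((p - 2) / 2) - ‖B‖ ^ ((p - 2) / 2)) • B := by
    simp only [Vm]
    module
  calc max ‖A‖ ‖B‖ ^ ((p - 2) / 2) * ‖A - B‖ = ‖‖A‖ ^ ((p - 2) / 2) • (A - B)‖ := by
        rw [max_eq_left hBA, norm_smul, Real.norm_of_nonneg (by positivity)]
    _ ≤ ‖Vm p A - Vm p B‖ + |‖A‖ ^ ((p - 2) / 2) - ‖B‖ ^ ((p - 2) / 2)| * ‖B‖ := by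
        rw [hsplit, ← Real.norm_eq_abs, ← norm_smul]
        exact norm_sub_le _ _
    _ ≤ 2 * ‖Vm p A - Vm p B‖ := by
        linarith [norm_sub_norm_le (Vm p A) (Vm p B)]

lemma norm_rpow_mul_norm_sub_le (hp : 1 ≤ p) {A : EuclideanSpace ℝ ι} (hA : A ≠ 0)
    (B : EuclideanSpace ℝ ι) :
    ‖A‖ ^ (p - 1) * ‖A - B‖ ≤ ‖A‖ ^ p / 4 + 20 * ‖Vm p A - Vm p B‖ ^ 2 := by
  have ha : 0 < ‖A‖ := norm_pos_iff.2 hA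
  rcases le_or_gt ‖A - B‖ (‖A‖ / 4) with hnear | hfar
  · calc ‖A‖ ^ (p - 1) * ‖A - B‖ ≤ ‖A‖ ^ (p - 1) * (‖A‖ / 4) := by gcongr
      _ = ‖A‖ ^ p / 4 := by rw [Real.rpow_sub_one ha.ne']; field_simp
      _ ≤ _ := le_add_of_nonneg_right (by positivity)
  · set m := max ‖A‖ ‖B‖
    have hm0 : 0 < m := lt_max_of_lt_left ha
    have hm5 : m ≤ 5 * ‖A - B‖ :=
      max_le (by linarith) (by linarith [norm_sub_norm_le B A, norm_sub_rev A B])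
    have hV : (m ^ ((p - 2) / 2) * ‖A - B‖) ^ 2 ≤ (2 * ‖Vm p A - Vm p B‖) ^ 2 :=
      pow_le_pow_left₀ (by positivity) (max_rpow_mul_norm_sub_le hp A B) 2
    calc ‖A‖ ^ (p - 1) * ‖A - B‖ ≤ m ^ (p - 1) * ‖A - B‖ := by
          gcongr
          exact le_max_left _ _
      _ = (m ^ ((p - 2) / 2)) ^ 2 * m * ‖A - B‖ := by
          rw [← Real.rpow_mul_natCast hm0.le, ← Real.rpow_add_one hm0.ne']
          congr 2
          push_cast
          ring
      _ ≤ (m ^ ((p - 2) / 2)) ^ 2 * (5 * ‖A - B‖) * ‖A - B‖ := by gcongr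
      _ = 5 * (m ^ ((p - 2) / 2) * ‖A - B‖) ^ 2 := by ring
      _ ≤ 20 * ‖Vm p A - Vm p B‖ ^ 2 := by linarith
      _ ≤ _ := le_add_of_nonneg_left (by positivity)

end V

section ReverseInequality

variable {X : Type*} [MeasurableSpace X] {μ : Measure X} {p b : ℝ} {ι : Type} [Fintype ι]
  {g : X → EuclideanSpace ℝ ι} {φ : X → ℝ} {A : EuclideanSpace ℝ ι}

lemma enorm_sub_integral_smul_le (hg : Integrable g μ) (hφ0 : ∀ x, 0 ≤ φ x) (hφb : ∀ x, φ x ≤ b)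
    (hφ1 : ∫ x, φ x ∂μ = 1) :
    ‖A - ∫ x, φ x • g x ∂μ‖ₑ ≤ ∫⁻ x, ENNReal.ofReal (φ x * ‖A - g x‖) ∂μ := by
  have hφi : Integrable φ μ := not_imp_comm.1 integral_undef (by rw [hφ1]; exact one_ne_zero)
  have hφg : Integrable (fun x => φ x • g x) μ :=
    hg.bdd_smul b hφi.1 (ae_of_all _ fun x => by
      rw [Real.norm_of_nonneg (hφ0 x)]
      exact hφb x)
  have hsub : A - ∫ x, φ x • g x ∂μ = ∫ x, φ x • (A - g x) ∂μ := by
    simp_rw [smul_sub]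
    rw [integral_sub (hφi.smul_const A) hφg, integral_smul_const, hφ1, one_smul]
  rw [hsub]
  refine (enorm_integral_le_lintegral_enorm _).trans_eq (lintegral_congr fun x => ?_)
  rw [← ofReal_norm, norm_smul, Real.norm_of_nonneg (hφ0 x)]

lemma ofReal_rpow_mul_le {t : ℝ} (hp : 1 ≤ p) (hA : A ≠ 0) (ht : 0 ≤ t) (htb : t ≤ b)
    (B : EuclideanSpace ℝ ι) :
    ENNReal.ofReal (‖A‖ ^ (p - 1)) * ENNReal.ofReal (t * ‖A - B‖) ≤
      ENNReal.ofReal t * ENNReal.ofReal (‖A‖ ^ p / 4) +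
        ENNReal.ofReal (20 * b) * ‖Vm p A - Vm p B‖ₑ ^ 2 := by
  have hb : 0 ≤ b := ht.trans htb
  rw [← ofReal_norm (Vm p A - _), ← ENNReal.ofReal_pow (norm_nonneg _),
    ← ENNReal.ofReal_mul (by positivity), ← ENNReal.ofReal_mul ht,
    ← ENNReal.ofReal_mul (by positivity), ← ENNReal.ofReal_add (by positivity) (by positivity)]
  refine ENNReal.ofReal_le_ofReal ?_
  calc ‖A‖ ^ (p - 1) * (t * ‖A - B‖) = t * (‖A‖ ^ (p - 1) * ‖A - B‖) := by ring
    _ ≤ t * (‖A‖ ^ p / 4 + 20 * ‖Vm p A - Vm p B‖ ^ 2) := by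
        gcongr
        exact norm_rpow_mul_norm_sub_le hp hA B
    _ = t * (‖A‖ ^ p / 4) + 20 * t * ‖Vm p A - Vm p B‖ ^ 2 := by ring
    _ ≤ t * (‖A‖ ^ p / 4) + 20 * b * ‖Vm p A - Vm p B‖ ^ 2 := by gcongr

lemma ofReal_norm_rpow_div_four_le (hp : 1 ≤ p) (hg : Integrable g μ) (hφ0 : ∀ x, 0 ≤ φ x)
    (hφb : ∀ x, φ x ≤ b) (hφ1 : ∫ x, φ x ∂μ = 1) (hA0 : A ≠ 0)
    (hA : ‖∫ x, φ x • g x ∂μ‖ ≤ ‖A‖ / 2) :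
    ENNReal.ofReal (‖A‖ ^ p / 4) ≤
      ENNReal.ofReal (20 * b) * ∫⁻ x, ‖Vm p A - Vm p (g x)‖ₑ ^ 2 ∂μ := by
  have ha : ‖A‖ ≠ 0 := norm_ne_zero_iff.2 hA0
  have hφi : Integrable φ μ := not_imp_comm.1 integral_undef (by rw [hφ1]; exact one_ne_zero)
  have hφ1' : ∫⁻ x, ENNReal.ofReal (φ x) ∂μ = 1 := by
    rw [← ofReal_integral_eq_lintegral_ofReal hφi (ae_of_all _ hφ0), hφ1, ENNReal.ofReal_one]
  refine (ENNReal.add_le_add_iff_left (ENNReal.ofReal_ne_top (r := ‖A‖ ^ p / 4))).1 ?_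
  calc ENNReal.ofReal (‖A‖ ^ p / 4) + ENNReal.ofReal (‖A‖ ^ p / 4)
      = ENNReal.ofReal (‖A‖ ^ (p - 1)) * ENNReal.ofReal (‖A‖ / 2) := by
        rw [← ENNReal.ofReal_add (by positivity) (by positivity),
          ← ENNReal.ofReal_mul (by positivity), Real.rpow_sub_one ha]
        congr 1
        field_simp
        norm_num
    _ ≤ ENNReal.ofReal (‖A‖ ^ (p - 1)) * ‖A - ∫ x, φ x • g x ∂μ‖ₑ := by
        gcongr
        rw [← ofReal_norm]
        exact ENNReal.ofReal_le_ofReal (by linarith [norm_sub_norm_le A (∫ x, φ x • g x ∂μ)])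
    _ ≤ ENNReal.ofReal (‖A‖ ^ (p - 1)) * ∫⁻ x, ENNReal.ofReal (φ x * ‖A - g x‖) ∂μ := by
        gcongr
        exact enorm_sub_integral_smul_le hg hφ0 hφb hφ1
    _ ≤ ∫⁻ x, (ENNReal.ofReal (φ x) * ENNReal.ofReal (‖A‖ ^ p / 4) +
          ENNReal.ofReal (20 * b) * ‖Vm p A - Vm p (g x)‖ₑ ^ 2) ∂μ := by
        rw [← lintegral_const_mul' _ _ ENNReal.ofReal_ne_top]
        exact lintegral_mono fun x => ofReal_rpow_mul_le hp hA0 (hφ0 x) (hφb x) (g x)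
    _ = ENNReal.ofReal (‖A‖ ^ p / 4) +
          ENNReal.ofReal (20 * b) * ∫⁻ x, ‖Vm p A - Vm p (g x)‖ₑ ^ 2 ∂μ := by
        rw [lintegral_add_left' (hφi.1.aemeasurable.ennreal_ofReal.mul_const _),
          lintegral_mul_const' _ _ ENNReal.ofReal_ne_top, hφ1', one_mul,
          lintegral_const_mul' _ _ ENNReal.ofReal_ne_top]

end ReverseInequality

/-! ### Averages of the gradient -/

section Bump

variable {d : ℕ} {B r : ℝ} {z : Ed d} {φ : Ed d → ℝ}

/-- `φ` is a smooth probability density supported in `cube z r` which obeys the bounds of a fixed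
profile rescaled to sidelength `r`, with constant `B`. -/
structure IsScaledBump (B : ℝ) (z : Ed d) (r : ℝ) (φ : Ed d → ℝ) : Prop where
  contDiff : ContDiff ℝ (⊤ : ℕ∞) φ
  tsupport_subset : tsupport φ ⊆ cube z r
  nonneg : ∀ x, 0 ≤ φ x
  integral_eq_one : ∫ x, φ x = 1
  le_div : ∀ x, φ x ≤ B / r ^ d
  abs_pder_le : ∀ i x, |pder φ i x| ≤ B / (r ^ d * r)

lemma IsScaledBump.hasCompactSupport (hφ : IsScaledBump B z r φ) : HasCompactSupport φ :=
  isCompact_of_isClosed_isBounded (isClosed_tsupport φ) <|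
    (Metric.isBounded_iff.2 ⟨√d * r, fun x hx y hy => by
      rw [dist_eq_norm]
      exact norm_sub_le_of_mem_cube hx hy⟩).subset hφ.tsupport_subset

lemma pder_const_mul (hφ : Differentiable ℝ φ) (a : ℝ) (i : Fin d) (x : Ed d) :
    pder (fun y => a * φ y) i x = a * pder φ i x := by
  rw [pder, fderiv_const_mul (hφ x)]
  rfl

lemma IsScaledBump.rescale (hφ : IsScaledBump B 0 1 φ) (hr : 0 < r) (z : Ed d) :
    IsScaledBump B z r fun x => (r ^ d)⁻¹ * φ (-(r⁻¹ • z) + r⁻¹ • x) where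
  contDiff := contDiff_const.mul (hφ.contDiff.comp (by fun_prop))
  tsupport_subset x hx i := by
    have hcont : Continuous fun x : Ed d => -(r⁻¹ • z) + r⁻¹ • x := by fun_prop
    have hx' : x ∈ tsupport (φ ∘ fun x => -(r⁻¹ • z) + r⁻¹ • x) :=
      tsupport_mul_subset_right (f := fun _ => (r ^ d)⁻¹) hx
    have hmem : -(r⁻¹ • z) + r⁻¹ • x ∈ tsupport φ := tsupport_comp_subset_preimage φ hcont hx'
    have hi : |r⁻¹ * (x i - z i)| < 1 / 2 := by
      simpa [mul_sub, ← sub_eq_neg_add] using hφ.tsupport_subset hmem i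
    rw [abs_mul, abs_of_pos (inv_pos.2 hr), inv_mul_lt_iff₀ hr] at hi
    linarith
  nonneg x := mul_nonneg (by positivity) (hφ.nonneg _)
  integral_eq_one := by
    simp_rw [← sub_eq_neg_add, ← smul_sub]
    rw [integral_const_mul, integral_sub_right_eq_self (fun x => φ (r⁻¹ • x)) z,
      Measure.integral_comp_inv_smul, hφ.integral_eq_one, finrank_euclideanSpace,
      Fintype.card_fin, abs_of_pos (by positivity), smul_eq_mul, mul_one]
    exact inv_mul_cancel₀ (by positivity)
  le_div x := by
    rw [div_eq_inv_mul]
    gcongr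
    simpa using hφ.le_div (-(r⁻¹ • z) + r⁻¹ • x)
  abs_pder_le i x := by
    have hdiff : Differentiable ℝ φ := hφ.contDiff.differentiable (by simp)
    have hdiff' : Differentiable ℝ fun x => φ (-(r⁻¹ • z) + r⁻¹ • x) := hdiff.comp (by fun_prop)
    rw [pder_const_mul hdiff', pder_comp_add_smul hdiff, abs_mul, abs_mul,
      abs_of_pos (by positivity), abs_of_pos (inv_pos.2 hr), div_eq_inv_mul, mul_inv, mul_assoc]
    gcongr
    simpa using hφ.abs_pder_le i (-(r⁻¹ • z) + r⁻¹ • x)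

lemma exists_isScaledBump_zero_one (d : ℕ) :
    ∃ B : ℝ, 0 < B ∧ ∃ φ, IsScaledBump B (0 : Ed d) 1 φ := by
  let b : ContDiffBump (0 : Ed d) := ⟨1 / 8, 1 / 4, by norm_num, by norm_num⟩
  set φ := b.normed volume with hφ
  have hsmooth : ContDiff ℝ (⊤ : ℕ∞) φ := b.contDiff_normed
  have hcompact : HasCompactSupport φ := b.hasCompactSupport_normed
  obtain ⟨B₀, hB₀⟩ := hcompact.exists_bound_of_continuous hsmooth.continuous
  obtain ⟨B₁, hB₁⟩ := (hcompact.fderiv ℝ).exists_bound_of_continuous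
    (hsmooth.continuous_fderiv (by simp))
  refine ⟨max 1 (max B₀ B₁), by positivity, φ, hsmooth, ?_, b.nonneg_normed, b.integral_normed,
    fun x => ?_, fun i x => ?_⟩
  · rw [hφ, b.tsupport_normed_eq]
    exact closedBall_subset_cube (mem_cube_self 0 (r := 1 / 2) (by norm_num)) (by norm_num)
  · have hx := (le_abs_self (φ x)).trans (hB₀ x)
    simp [hx]
  · have hx := (fderiv ℝ φ x).le_opNorm (EuclideanSpace.single i 1)
    have hx' : |pder φ i x| ≤ B₁ := by
      simpa [pder] using hx.trans (by simpa using hB₁ x)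
    simp [hx']

/-- A constant `B`, depending only on the dimension, for which every cube carries an
`IsScaledBump B` function. -/
def bumpConst (d : ℕ) : ℝ := (exists_isScaledBump_zero_one d).choose

lemma bumpConst_pos (d : ℕ) : 0 < bumpConst d := (exists_isScaledBump_zero_one d).choose_spec.1

lemma exists_isScaledBump (z : Ed d) (hr : 0 < r) : ∃ φ, IsScaledBump (bumpConst d) z r φ :=
  let ⟨_, hφ⟩ := (exists_isScaledBump_zero_one d).choose_spec.2
  ⟨_, hφ.rescale hr z⟩

lemma integral_pder_eq_zero (hφ : ContDiff ℝ 1 φ) (hc : HasCompactSupport φ) (i : Fin d) :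
    ∫ x, pder φ i x = 0 := by
  have hint : Integrable fun x => fderiv ℝ φ x (EuclideanSpace.single i 1) :=
    (continuous_pder hφ i).integrable_of_hasCompactSupport <|
      hc.mono' fun x hx => by_contra fun h => hx (pder_eq_zero_of_notMem_tsupport h i)
  simpa [pder] using integral_mul_fderiv_eq_neg_fderiv_mul_of_integrable
    (μ := (volume : Measure (Ed d))) (f := fun _ => (1 : ℝ)) (g := φ)
    (v := EuclideanSpace.single i 1) (by simp) (by simpa using hint)
    (by simpa using hφ.continuous.integrable_of_hasCompactSupport hc)
    (fun _ _ => differentiableAt_const _) (fun x _ => hφ.differentiable one_ne_zero x)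

end Bump

section AveragedGradient

variable {d : ℕ} {ι : Type} [Fintype ι] {B M r : ℝ} {z : Ed d} {φ : Ed d → ℝ}
  {v : Ed d → EuclideanSpace ℝ ι} {g : Ed d → EuclideanSpace ℝ (ι × Fin d)}

lemma IsScaledBump.setIntegral_eq_one (hφ : IsScaledBump B z r φ) : ∫ x in cube z r, φ x = 1 := by
  rw [setIntegral_eq_integral_of_forall_compl_eq_zero fun x hx =>
    image_eq_zero_of_notMem_tsupport fun h => hx (hφ.tsupport_subset h), hφ.integral_eq_one]

lemma IsScaledBump.setIntegral_pder_eq_zero (hφ : IsScaledBump B z r φ) (i : Fin d) :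
    ∫ x in cube z r, pder φ i x = 0 := by
  rw [setIntegral_eq_integral_of_forall_compl_eq_zero fun x hx =>
    pder_eq_zero_of_notMem_tsupport (fun h => hx (hφ.tsupport_subset h)) i]
  exact integral_pder_eq_zero (hφ.contDiff.of_le (by exact_mod_cast le_top)) hφ.hasCompactSupport i

lemma IsScaledBump.abs_setIntegral_mul_le (hφ : IsScaledBump B z r φ) (hr : 0 < r)
    (hvg : IsWeakGrad (cube z r) v g) (hv : IntegrableOn v (cube z r))
    (hosc : ∀ x ∈ cube z r, ‖v x - v z‖ ≤ M) (a : ι) (i : Fin d) :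
    |∫ x in cube z r, g x (a, i) * φ x| ≤ M * B / r := by
  have hM : 0 ≤ M := (norm_nonneg _).trans (hosc z (mem_cube_self z hr))
  have hpc : Continuous (pder φ i) :=
    continuous_pder (hφ.contDiff.of_le (by exact_mod_cast le_top)) i
  have hvol : volume (cube z r) < ∞ := (volume_cube_ne_top z hr.le).lt_top
  have hva : IntegrableOn (fun x => v x a) (cube z r) :=
    (EuclideanSpace.proj a : EuclideanSpace ℝ ι →L[ℝ] ℝ).integrable_comp hv
  have hvp : IntegrableOn (fun x => v x a * pder φ i x) (cube z r) :=
    hva.mul_bdd hpc.aestronglyMeasurable (ae_of_all _ fun x => hφ.abs_pder_le i x)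
  have hpi : IntegrableOn (pder φ i) (cube z r) :=
    Measure.integrableOn_of_bounded hvol.ne hpc.aestronglyMeasurable
      (ae_of_all _ fun x => hφ.abs_pder_le i x)
  have hcentre : ∫ x in cube z r, v x a * pder φ i x =
      ∫ x in cube z r, (v x a - v z a) * pder φ i x := by
    simp_rw [sub_mul]
    rw [integral_sub hvp (hpi.const_mul _), integral_const_mul, hφ.setIntegral_pder_eq_zero,
      mul_zero, sub_zero]
  have hweak := hvg φ hφ.contDiff hφ.hasCompactSupport hφ.tsupport_subset a i
  calc |∫ x in cube z r, g x (a, i) * φ x|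
      = ‖∫ x in cube z r, (v x a - v z a) * pder φ i x‖ := by
        rw [← hcentre, hweak, norm_neg, Real.norm_eq_abs]
    _ ≤ M * (B / (r ^ d * r)) * volume.real (cube z r) := by
        refine norm_setIntegral_le_of_norm_le_const hvol fun x hx => ?_
        rw [norm_mul]
        exact mul_le_mul ((PiLp.norm_apply_le (v x - v z) a).trans (hosc x hx))
          (hφ.abs_pder_le i x) (norm_nonneg _) hM
    _ = M * B / r := by
        rw [volumeReal_cube z hr.le]
        field_simp

lemma IsScaledBump.norm_setIntegral_smul_le (hφ : IsScaledBump B z r φ) (hr : 0 < r)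
    (hvg : IsWeakGrad (cube z r) v g) (hv : IntegrableOn v (cube z r))
    (hg : IntegrableOn g (cube z r)) (hosc : ∀ x ∈ cube z r, ‖v x - v z‖ ≤ M) :
    ‖∫ x in cube z r, φ x • g x‖ ≤ √(Fintype.card (ι × Fin d)) * (M * B / r) := by
  refine norm_le_sqrt_card_mul fun k => ?_
  have hφg : IntegrableOn (fun x => φ x • g x) (cube z r) :=
    hg.bdd_smul (B / r ^ d) hφ.contDiff.continuous.aestronglyMeasurable (ae_of_all _ fun x => by
      rw [Real.norm_of_nonneg (hφ.nonneg x)]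
      exact hφ.le_div x)
  have hcomp : (∫ x in cube z r, φ x • g x) k = ∫ x in cube z r, g x k * φ x := by
    have h := (EuclideanSpace.proj k : EuclideanSpace ℝ (ι × Fin d) →L[ℝ] ℝ).integral_comp_comm hφg
    simpa [mul_comm] using h.symm
  rw [hcomp]
  exact hφ.abs_setIntegral_mul_le hr hvg hv hosc k.1 k.2

end AveragedGradient

/-! ### Decay of the superlevel sets of the gradient -/

section SuperlevelDecay

variable {d : ℕ} {ι : Type} [Fintype ι] {p α l M H Λ r ρ : ℝ} {z : Ed d} {U V : Set (Ed d)}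
  {v : Ed d → EuclideanSpace ℝ ι} {g : Ed d → EuclideanSpace ℝ (ι × Fin d)}
  {W : Ed d → EuclideanSpace ℝ ((ι × Fin d) × Fin d)}

/-- On `U` the function `v` has weak gradient `g`, and `V(g)` has weak gradient `W`. -/
structure IsVRegular (p : ℝ) (U : Set (Ed d)) (v : Ed d → EuclideanSpace ℝ ι)
    (g : Ed d → EuclideanSpace ℝ (ι × Fin d))
    (W : Ed d → EuclideanSpace ℝ ((ι × Fin d) × Fin d)) : Prop where
  integrableOn : IntegrableOn v U
  isWeakGrad : IsWeakGrad U v g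
  memLp_grad : MemLp g (ENNReal.ofReal p) (volume.restrict U)
  isWeakGrad_Vm : IsWeakGrad U (fun x => Vm p (g x)) W
  aestronglyMeasurable : AEStronglyMeasurable W (volume.restrict U)

lemma IsVRegular.mono (h : IsVRegular p U v g W) (hU : MeasurableSet U) (hVU : V ⊆ U) :
    IsVRegular p V v g W where
  integrableOn := h.integrableOn.mono_set hVU
  isWeakGrad := h.isWeakGrad.mono hU hVU
  memLp_grad := h.memLp_grad.mono_measure (Measure.restrict_mono hVU le_rfl)
  isWeakGrad_Vm := h.isWeakGrad_Vm.mono hU hVU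
  aestronglyMeasurable := h.aestronglyMeasurable.mono_set hVU

lemma nullMeasurableSet_lt_norm {X E : Type*} [MeasurableSpace X] {μ : Measure X}
    [NormedAddCommGroup E] {f : X → E} (hf : AEStronglyMeasurable f μ) (l : ℝ) :
    NullMeasurableSet {x | l < ‖f x‖} μ :=
  nullMeasurableSet_lt aemeasurable_const hf.norm.aemeasurable

/-- If `v` oscillates by at most `M` on a cube of sidelength `r`, then `slopeConst ι d * (M / r)`
bounds twice the norm of the averaged gradient there. -/
def slopeConst (ι : Type) [Fintype ι] (d : ℕ) : ℝ :=
  2 * √(Fintype.card (ι × Fin d)) * bumpConst d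

/-- The constant of the superlevel estimate `IsVRegular.ofReal_rpow_mul_measure_le`. -/
def superlevelConst (d : ℕ) : ℝ := 80 * bumpConst d * d * 2 ^ d

lemma slopeConst_nonneg (ι : Type) [Fintype ι] (d : ℕ) : 0 ≤ slopeConst ι d := by
  have := bumpConst_pos d
  unfold slopeConst
  positivity

lemma superlevelConst_nonneg (d : ℕ) : 0 ≤ superlevelConst d := by
  have := bumpConst_pos d
  unfold superlevelConst
  positivity

lemma IsVRegular.ofReal_rpow_div_four_le (h : IsVRegular p (cube z r) v g W) (hp : 1 ≤ p)
    (hr : 0 < r) (hosc : ∀ x ∈ cube z r, ‖v x - v z‖ ≤ M) (hl : 0 < l)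
    (hMl : slopeConst ι d * (M / r) ≤ l) {A : EuclideanSpace ℝ (ι × Fin d)} (hA : l < ‖A‖) :
    ENNReal.ofReal (l ^ p / 4) ≤ ENNReal.ofReal (20 * (bumpConst d / r ^ d)) *
      ∫⁻ x in cube z r, ‖Vm p (g x) - Vm p A‖ₑ ^ 2 := by
  have hg : IntegrableOn g (cube z r) := by
    have : IsFiniteMeasure (volume.restrict (cube z r)) := ⟨by
      simpa using (volume_cube_ne_top z hr.le).lt_top⟩
    exact h.memLp_grad.integrable (by simpa using hp)
  obtain ⟨φ, hφ⟩ := exists_isScaledBump z hr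
  have havg : ‖∫ x in cube z r, φ x • g x‖ ≤ ‖A‖ / 2 := calc
    _ ≤ √(Fintype.card (ι × Fin d)) * (M * bumpConst d / r) :=
      hφ.norm_setIntegral_smul_le hr h.isWeakGrad h.integrableOn hg hosc
    _ = slopeConst ι d * (M / r) / 2 := by rw [slopeConst]; ring
    _ ≤ ‖A‖ / 2 := by linarith
  calc ENNReal.ofReal (l ^ p / 4) ≤ ENNReal.ofReal (‖A‖ ^ p / 4) := by gcongr
    _ ≤ _ := by
      simp_rw [enorm_sub_rev (Vm p (g _))]
      exact ofReal_norm_rpow_div_four_le hp hg hφ.nonneg hφ.le_div hφ.setIntegral_eq_one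
        (norm_pos_iff.1 (hl.trans hA)) havg

lemma IsVRegular.ofReal_rpow_mul_measure_le (h : IsVRegular p (cube z (2 * r)) v g W) (hp : 1 ≤ p)
    (hr : 0 < r) (hosc : ∀ x ∈ cube z r, ‖v x - v z‖ ≤ M) (hl : 0 < l)
    (hMl : slopeConst ι d * (M / r) ≤ l) :
    ENNReal.ofReal (l ^ p) * volume.restrict (cube z r) {x | l < ‖g x‖} ≤
      ENNReal.ofReal (superlevelConst d * r ^ 2) * ∫⁻ x in cube z (2 * r), ‖W x‖ₑ ^ 2 := by
  have hsub : cube z r ⊆ cube z (2 * r) := cube_subset_cube (by linarith)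
  have hr' := h.mono (measurableSet_cube z (2 * r)) hsub
  have hB := bumpConst_pos d
  have hV : IntegrableOn (fun x => Vm p (g x)) (cube z (2 * r)) := by
    have : IsFiniteMeasure (volume.restrict (cube z (2 * r))) := ⟨by
      simpa using (volume_cube_ne_top z (by positivity)).lt_top⟩
    exact (memLp_two_Vm (by linarith) h.memLp_grad).integrable one_le_two
  set b := 20 * (bumpConst d / r ^ d) with hb
  have hchebyshev : ENNReal.ofReal (l ^ p / 4) * volume.restrict (cube z r) {x | l < ‖g x‖} ≤
      ENNReal.ofReal b * ∫⁻ x in cube z r, ∫⁻ y in cube z r, ‖Vm p (g y) - Vm p (g x)‖ₑ ^ 2 := by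
    rw [← lintegral_indicator_const₀ (nullMeasurableSet_lt_norm hr'.memLp_grad.1 l),
      ← lintegral_const_mul' _ _ ENNReal.ofReal_ne_top]
    exact lintegral_mono fun x => indicator_le' (s := {x | l < ‖g x‖})
      (fun x hx => hr'.ofReal_rpow_div_four_le hp hr hosc hl hMl hx) (fun _ _ => zero_le) x
  calc ENNReal.ofReal (l ^ p) * volume.restrict (cube z r) {x | l < ‖g x‖}
      = 4 * (ENNReal.ofReal (l ^ p / 4) * volume.restrict (cube z r) {x | l < ‖g x‖}) := by
        rw [← mul_assoc, ← ENNReal.ofReal_ofNat 4, ← ENNReal.ofReal_mul zero_le_four,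
          mul_div_cancel₀ _ four_ne_zero]
    _ ≤ 4 * (ENNReal.ofReal b * (ENNReal.ofReal (d * r ^ 2 * (2 * r) ^ d) *
          ∫⁻ x in cube z (2 * r), ‖W x‖ₑ ^ 2)) := by
        refine mul_le_mul_right (hchebyshev.trans (mul_le_mul_right ?_ _)) _
        exact h.isWeakGrad_Vm.lintegral_lintegral_cube_enorm_sub_sq_le hr hV h.aestronglyMeasurable
    _ = _ := by
        rw [← mul_assoc, ← mul_assoc, ← ENNReal.ofReal_ofNat 4, ← ENNReal.ofReal_mul zero_le_four,
          ← ENNReal.ofReal_mul (by positivity), superlevelConst, hb, mul_pow]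
        congr 2
        field_simp
        ring

lemma IsVRegular.ofReal_rpow_mul_measure_le_of_holder (h : IsVRegular p (cube z (4 * ρ)) v g W)
    (hp : 1 ≤ p) (hα : 0 ≤ α) (hH0 : 0 ≤ H)
    (hH : ∀ x ∈ cube z (4 * ρ), ∀ y ∈ cube z (4 * ρ), ‖v x - v y‖ ≤ H * dist x y ^ α)
    (hr : 0 < r) (hrρ : r ≤ ρ) (hl : 0 < l)
    (hHl : slopeConst ι d * (H * (√d * r) ^ α / r) ≤ l) :
    ENNReal.ofReal (l ^ p) * volume.restrict (cube z ρ) {x | l < ‖g x‖} ≤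
      ENNReal.ofReal (superlevelConst d * 2 ^ d * r ^ 2) *
        ∫⁻ x in cube z (4 * ρ), ‖W x‖ₑ ^ 2 := by
  have hρ4 : cube z ρ ⊆ cube z (4 * ρ) := cube_subset_cube (by linarith)
  have hnull {T : Set (Ed d)} (hT : T ⊆ cube z (4 * ρ)) :
      NullMeasurableSet {x | l < ‖g x‖} (volume.restrict T) :=
    nullMeasurableSet_lt_norm (h.memLp_grad.1.mono_set hT) l
  have htile : ∀ w ∈ cube z (ρ + r),
      ∫⁻ x in cube w r, {x | l < ‖g x‖}.indicator (fun _ => ENNReal.ofReal (l ^ p)) x ≤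
        ENNReal.ofReal (superlevelConst d * r ^ 2) * ∫⁻ x in cube w (2 * r), ‖W x‖ₑ ^ 2 := by
    intro w hw
    have hw2 : cube w (2 * r) ⊆ cube z (4 * ρ) := cube_subset_cube_of_mem hw (by linarith)
    have hwr : cube w r ⊆ cube z (4 * ρ) := cube_subset_cube_of_mem hw (by linarith)
    have hwmem : w ∈ cube w r := mem_cube_self w hr
    rw [lintegral_indicator_const₀ (hnull hwr)]
    refine (h.mono (measurableSet_cube _ _) hw2).ofReal_rpow_mul_measure_le hp hr
      (fun x hx => (hH x (hwr hx) w (hwr hwmem)).trans ?_) hl hHl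
    gcongr
    rw [dist_eq_norm]
    exact norm_sub_le_of_mem_cube hx hwmem
  have hcover := setLIntegral_cube_le_of_forall_tile_le (S := 4 * ρ) hr (by positivity)
    (by linarith) (aemeasurable_const.indicator₀ (hnull hρ4))
    (h.aestronglyMeasurable.enorm.pow_const 2) ENNReal.ofReal_ne_top htile
  rwa [lintegral_indicator_const₀ (hnull hρ4), ← ENNReal.ofReal_mul' (by positivity),
    mul_div_cancel_right₀ _ hr.ne', mul_right_comm] at hcover

lemma exists_rpow_one_sub_eq_div (hα : α < 1) (hΛ : 0 < Λ) (hρ : 0 < ρ)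
    (hl : Λ * ρ ^ (α - 1) ≤ l) :
    ∃ r, 0 < r ∧ r ≤ ρ ∧ r ^ (1 - α) = Λ / l ∧
      r ^ 2 = Λ ^ (2 / (1 - α)) * l ^ (-(2 / (1 - α))) := by
  have hα' : 0 < 1 - α := sub_pos.2 hα
  have hl0 : 0 < l := lt_of_lt_of_le (by positivity) hl
  have hΛl : 0 < Λ / l := by positivity
  have hrpow : ((Λ / l) ^ (1 / (1 - α))) ^ (1 - α) = Λ / l := by
    rw [← Real.rpow_mul hΛl.le, one_div_mul_cancel hα'.ne', Real.rpow_one]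
  refine ⟨(Λ / l) ^ (1 / (1 - α)), by positivity, ?_, hrpow, ?_⟩
  · refine (Real.rpow_le_rpow_iff (by positivity) hρ.le hα').1 ?_
    rw [hrpow, div_le_iff₀ hl0, ← div_le_iff₀' (by positivity)]
    rwa [← neg_sub 1 α, Real.rpow_neg hρ.le] at hl
  · rw [← Real.rpow_mul_natCast hΛl.le, Real.rpow_neg hl0.le, ← div_eq_mul_inv,
      ← Real.div_rpow hΛ.le hl0.le]
    congr 1
    push_cast
    ring

lemma IsVRegular.measure_lt_norm_le (h : IsVRegular p (cube z (4 * ρ)) v g W) (hp : 1 ≤ p)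
    (hα : α ∈ Ico 0 1) (hH0 : 0 ≤ H)
    (hH : ∀ x ∈ cube z (4 * ρ), ∀ y ∈ cube z (4 * ρ), ‖v x - v y‖ ≤ H * dist x y ^ α)
    (hΛ0 : 0 < Λ) (hΛ : slopeConst ι d * √d ^ α * H ≤ Λ) (hρ : 0 < ρ)
    (hl : Λ * ρ ^ (α - 1) ≤ l) :
    volume.restrict (cube z ρ) {x | l < ‖g x‖} ≤
      ENNReal.ofReal (superlevelConst d * 2 ^ d * Λ ^ (2 / (1 - α))) *
        (∫⁻ x in cube z (4 * ρ), ‖W x‖ₑ ^ 2) * ENNReal.ofReal (l ^ (-(p + 2 / (1 - α)))) := by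
  obtain ⟨hα0, hα1⟩ := hα
  have hl0 : 0 < l := lt_of_lt_of_le (by positivity) hl
  have hlp : 0 < l ^ p := by positivity
  have hσ : 0 ≤ superlevelConst d := superlevelConst_nonneg d
  -- At scale `r` the slope `Λ r ^ (α - 1)` allowed by the Hölder bound equals `l`.
  obtain ⟨r, hr0, hrρ, hrpow, hrsq⟩ := exists_rpow_one_sub_eq_div hα1 hΛ0 hρ hl
  have hslope : slopeConst ι d * (H * (√d * r) ^ α / r) ≤ l := calc
    _ = slopeConst ι d * √d ^ α * H * (r ^ (1 - α))⁻¹ := by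
      rw [Real.mul_rpow (by positivity) hr0.le, Real.rpow_sub hr0, Real.rpow_one]
      field_simp
    _ ≤ Λ * (r ^ (1 - α))⁻¹ := by gcongr
    _ = l := by rw [hrpow]; field_simp
  have hscale := h.ofReal_rpow_mul_measure_le_of_holder hp hα0 hH0 hH hr0 hrρ hl0 hslope
  rw [mul_comm, ← ENNReal.le_div_iff_mul_le (by simp [hlp]) (by simp)] at hscale
  refine hscale.trans_eq ?_
  rw [hrsq, ← mul_assoc, neg_add, Real.rpow_add hl0, Real.rpow_neg hl0.le p,
    ENNReal.ofReal_mul (by positivity), ENNReal.ofReal_mul (inv_nonneg.2 hlp.le),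
    ENNReal.ofReal_inv_of_pos hlp, div_eq_mul_inv]
  ring

end SuperlevelDecay

section LayerCake

variable {X : Type*} [MeasurableSpace X] {μ : Measure X} {f : X → ℝ} {q s L : ℝ} {A : ℝ≥0∞}

lemma setLIntegral_Ioi_ofReal_rpow (hqs : q < s) (hL : 0 < L) :
    ∫⁻ t in Ioi L, ENNReal.ofReal (t ^ (q - s - 1)) =
      ENNReal.ofReal (L ^ (q - s) / (s - q)) := by
  rw [← ofReal_integral_eq_lintegral_ofReal (integrableOn_Ioi_rpow_of_lt (by linarith) hL),
    integral_Ioi_rpow_of_lt (by linarith) hL, sub_add_cancel, neg_div, ← div_neg, neg_sub]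
  filter_upwards [ae_restrict_mem measurableSet_Ioi] with t ht
  exact Real.rpow_nonneg (hL.trans ht).le _

lemma setLIntegral_Ioc_ofReal_rpow (hq : 0 < q) (hL : 0 < L) :
    ∫⁻ t in Ioc 0 L, ENNReal.ofReal (t ^ (q - 1)) = ENNReal.ofReal (L ^ q / q) := by
  rw [← ofReal_integral_eq_lintegral_ofReal, ← intervalIntegral.integral_of_le hL.le,
    integral_rpow (.inl (by linarith)), sub_add_cancel, Real.zero_rpow hq.ne', sub_zero]
  · exact (intervalIntegral.intervalIntegrable_rpow' (by linarith)).1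
  · filter_upwards [ae_restrict_mem measurableSet_Ioc] with t ht
    exact Real.rpow_nonneg ht.1.le _

lemma lintegral_rpow_le_of_measure_lt_le (hf0 : ∀ x, 0 ≤ f x) (hf : AEMeasurable f μ) (hq : 0 < q)
    (hqs : q < s) (hL : 0 < L) (hA : A ≠ ∞)
    (hdecay : ∀ l, L ≤ l → μ {x | l < f x} ≤ A * ENNReal.ofReal (l ^ (-s))) :
    ∫⁻ x, ENNReal.ofReal (f x ^ q) ∂μ ≤
      μ univ * ENNReal.ofReal (L ^ q) + A * ENNReal.ofReal (q / (s - q) * L ^ (q - s)) := by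
  have hlow : ∫⁻ t in Ioc 0 L, μ {x | t < f x} * ENNReal.ofReal (t ^ (q - 1)) ≤
      μ univ * ENNReal.ofReal (L ^ q / q) := by
    rw [← setLIntegral_Ioc_ofReal_rpow hq hL, ← lintegral_const_mul _ (by fun_prop)]
    exact lintegral_mono fun t => mul_le_mul_left (measure_mono (subset_univ _)) _
  have hhigh : ∫⁻ t in Ioi L, μ {x | t < f x} * ENNReal.ofReal (t ^ (q - 1)) ≤
      A * ENNReal.ofReal (L ^ (q - s) / (s - q)) := by
    rw [← setLIntegral_Ioi_ofReal_rpow hqs hL, ← lintegral_const_mul' _ _ hA]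
    refine setLIntegral_mono' measurableSet_Ioi fun t ht => ?_
    have ht0 : 0 < t := hL.trans ht
    calc μ {x | t < f x} * ENNReal.ofReal (t ^ (q - 1))
        ≤ A * ENNReal.ofReal (t ^ (-s)) * ENNReal.ofReal (t ^ (q - 1)) := by
          gcongr
          exact hdecay t (mem_Ioi.1 ht).le
      _ = A * ENNReal.ofReal (t ^ (q - s - 1)) := by
          rw [mul_assoc, ← ENNReal.ofReal_mul (by positivity), ← Real.rpow_add ht0]
          congr 3
          ring
  calc ∫⁻ x, ENNReal.ofReal (f x ^ q) ∂μ
      = ENNReal.ofReal q * ∫⁻ t in Ioi 0, μ {x | t < f x} * ENNReal.ofReal (t ^ (q - 1)) :=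
        lintegral_rpow_eq_lintegral_meas_lt_mul μ (ae_of_all _ hf0) hf hq
    _ ≤ ENNReal.ofReal q * (μ univ * ENNReal.ofReal (L ^ q / q) +
          A * ENNReal.ofReal (L ^ (q - s) / (s - q))) := by
        rw [← Ioc_union_Ioi_eq_Ioi hL.le]
        gcongr
        exact (lintegral_union_le _ _ _).trans (add_le_add hlow hhigh)
    _ = _ := by
        rw [mul_add, mul_left_comm, ← ENNReal.ofReal_mul hq.le, mul_div_cancel₀ _ hq.ne',
          mul_left_comm, ← ENNReal.ofReal_mul hq.le, mul_div_left_comm, mul_comm (L ^ (q - s))]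

end LayerCake

/-! ### Higher integrability -/

section MeanSize

variable {d : ℕ} {E : Type*} [NormedAddCommGroup E] {f : Ed d → E} {p r R : ℝ} {c z : Ed d}

/-- `(⨍_Q |f|^p)^{1/p} + 1` for `Q = cube c R`, the size of `f` on `Q` in terms of which the Hölder
hypothesis and the conclusion are stated. -/
def meanSize (p : ℝ) (f : Ed d → E) (c : Ed d) (R : ℝ) : ℝ :=
  (⨍ x in cube c R, ‖f x‖ ^ p) ^ (1 / p) + 1

lemma setAverage_norm_rpow_nonneg (p : ℝ) (f : Ed d → E) (A : Set (Ed d)) :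
    0 ≤ ⨍ x in A, ‖f x‖ ^ p :=
  integral_nonneg fun _ => by positivity

lemma one_le_meanSize (p : ℝ) (f : Ed d → E) (c : Ed d) (R : ℝ) : 1 ≤ meanSize p f c R :=
  le_add_of_nonneg_left (Real.rpow_nonneg (setAverage_norm_rpow_nonneg p f _) _)

lemma integrable_norm_rpow_of_memLp_ofReal {X : Type*} [MeasurableSpace X] {μ : Measure X}
    {f : X → E} (hp : 0 < p) (hf : MemLp f (ENNReal.ofReal p) μ) :
    Integrable (fun x => ‖f x‖ ^ p) μ := by
  simpa [ENNReal.toReal_ofReal hp.le] using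
    hf.integrable_norm_rpow (by simpa using hp) ENNReal.ofReal_ne_top

lemma memLp_ofReal_of_lintegral_ne_top {X : Type*} [MeasurableSpace X] {μ : Measure X}
    {f : X → E} (hp : 0 < p) (hf : AEStronglyMeasurable f μ)
    (h : ∫⁻ x, ENNReal.ofReal (‖f x‖ ^ p) ∂μ ≠ ∞) : MemLp f (ENNReal.ofReal p) μ := by
  rw [← integrable_norm_rpow_iff hf (by simpa using hp) (by simp), ENNReal.toReal_ofReal hp.le]
  refine ⟨(hf.norm.aemeasurable.pow_const p).aestronglyMeasurable, ?_⟩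
  rw [hasFiniteIntegral_iff_ofReal (ae_of_all _ fun _ => by positivity)]
  exact h.lt_top

lemma rpow_setAverage_norm_rpow_le (hp : 0 < p) (hR : 0 < R)
    (hf : MemLp f (ENNReal.ofReal p) (volume.restrict (cube c R))) {B : ℝ} (hB : 0 ≤ B)
    (h : ∫⁻ x in cube c R, ENNReal.ofReal (‖f x‖ ^ p) ≤ ENNReal.ofReal (R ^ d * B ^ p)) :
    (⨍ x in cube c R, ‖f x‖ ^ p) ^ (1 / p) ≤ B := by
  rw [← ofReal_integral_eq_lintegral_ofReal (integrable_norm_rpow_of_memLp_ofReal hp hf)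
    (ae_of_all _ fun _ => by positivity), ENNReal.ofReal_le_ofReal_iff (by positivity)] at h
  have havg : ⨍ x in cube c R, ‖f x‖ ^ p ≤ B ^ p := by
    rwa [setAverage_eq, volumeReal_cube _ hR.le, smul_eq_mul, inv_mul_le_iff₀ (by positivity)]
  rw [one_div]
  exact (Real.rpow_inv_le_iff_of_pos (setAverage_norm_rpow_nonneg p f _) hB hp).2 havg

lemma meanSize_le_of_subset (hp : 1 ≤ p) (hr : 0 < r) (hrR : r ≤ R) (hsub : cube z r ⊆ cube c R)
    (hf : MemLp f (ENNReal.ofReal p) (volume.restrict (cube c R))) :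
    meanSize p f z r ≤ (R / r) ^ d * meanSize p f c R := by
  have hp0 : 0 < p := by linarith
  have hratio : 1 ≤ (R / r) ^ d := one_le_pow₀ ((one_le_div hr).2 hrR)
  have hA := setAverage_norm_rpow_nonneg p f (cube c R)
  have havg := setAverage_cube_le_of_subset hr (hr.trans_le hrR) hsub
    (integrable_norm_rpow_of_memLp_ofReal hp0 hf) fun _ => by positivity
  have hroot : ((R / r) ^ d) ^ (1 / p) ≤ (R / r) ^ d :=
    Real.rpow_le_self_of_one_le hratio ((div_le_one hp0).2 hp)
  calc meanSize p f z r
      ≤ ((R / r) ^ d * ⨍ x in cube c R, ‖f x‖ ^ p) ^ (1 / p) + 1 := by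
        unfold meanSize
        gcongr
        exact setAverage_norm_rpow_nonneg p f _
    _ = ((R / r) ^ d) ^ (1 / p) * (⨍ x in cube c R, ‖f x‖ ^ p) ^ (1 / p) + 1 := by
        rw [Real.mul_rpow (by positivity) hA]
    _ ≤ (R / r) ^ d * (⨍ x in cube c R, ‖f x‖ ^ p) ^ (1 / p) + (R / r) ^ d := by gcongr
    _ = (R / r) ^ d * meanSize p f c R := by rw [meanSize, mul_add_one]

lemma setLIntegral_norm_rpow_le_meanSize (hp : 0 < p) (hR : 0 < R)
    (hf : MemLp f (ENNReal.ofReal p) (volume.restrict (cube c R))) :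
    ∫⁻ x in cube c R, ENNReal.ofReal (‖f x‖ ^ p) ≤
      ENNReal.ofReal (R ^ d * meanSize p f c R ^ p) := by
  have hA := setAverage_norm_rpow_nonneg p f (cube c R)
  rw [← ofReal_integral_eq_lintegral_ofReal (integrable_norm_rpow_of_memLp_ofReal hp hf)
    (ae_of_all _ fun _ => by positivity)]
  refine ENNReal.ofReal_le_ofReal ?_
  calc ∫ x in cube c R, ‖f x‖ ^ p = R ^ d * ⨍ x in cube c R, ‖f x‖ ^ p := by
        rw [setAverage_eq, volumeReal_cube _ hR.le, smul_eq_mul,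
          mul_inv_cancel_left₀ (by positivity)]
    _ = R ^ d * ((⨍ x in cube c R, ‖f x‖ ^ p) ^ (1 / p)) ^ p := by
        rw [← Real.rpow_mul hA, one_div_mul_cancel hp.ne', Real.rpow_one]
    _ ≤ R ^ d * meanSize p f c R ^ p := by
        unfold meanSize
        gcongr
        linarith

end MeanSize

section HigherIntegrability

variable {d : ℕ} {ι : Type} [Fintype ι] {p q α c₁ c₂ l r ρ R : ℝ} {c z : Ed d} {U : Set (Ed d)}
  {v : Ed d → EuclideanSpace ℝ ι} {g : Ed d → EuclideanSpace ℝ (ι × Fin d)}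
  {W : Ed d → EuclideanSpace ℝ ((ι × Fin d) × Fin d)}

/-- `v ∈ W^{1,p}(U)` with weak gradient `g`, where `V(g)` has weak gradient `W` and satisfies the
Caccioppoli estimate with constant `c₁`, and `v` satisfies the `α`-Hölder estimate with
constant `c₂`. -/
structure IsCaccioppoliHolder (p α c₁ c₂ : ℝ) (U : Set (Ed d)) (v : Ed d → EuclideanSpace ℝ ι)
    (g : Ed d → EuclideanSpace ℝ (ι × Fin d))
    (W : Ed d → EuclideanSpace ℝ ((ι × Fin d) × Fin d)) : Prop where
  memLp : MemLp v (ENNReal.ofReal p) (volume.restrict U)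
  isWeakGrad : IsWeakGrad U v g
  memLp_grad : MemLp g (ENNReal.ofReal p) (volume.restrict U)
  isWeakGrad_Vm : IsWeakGrad U (fun x => Vm p (g x)) W
  caccioppoli : ∀ (c : Ed d) (R : ℝ), 0 < R → cube c (4 * R) ⊆ U →
    MemLp W 2 (volume.restrict (cube c R)) ∧
    ∫⁻ x in cube c R, ‖W x‖ₑ ^ 2 ≤
      ENNReal.ofReal (c₁ / R ^ 2) * ∫⁻ x in cube c (4 * R), ‖Vm p (g x)‖ₑ ^ 2
  holder : ∀ (c : Ed d) (R : ℝ), 0 < R → cube c (3 * R) ⊆ U → ∀ x ∈ cube c R, ∀ y ∈ cube c R,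
    ‖v x - v y‖ ≤ c₂ * R ^ (1 - α) * meanSize p g c (2 * R) * dist x y ^ α

/-- Above `thresholdConst * K`, with `K` the size of the gradient at scale `ρ`, the superlevel sets
of the gradient in a cube of sidelength `ρ` decay. The summand `1` keeps it positive. -/
def thresholdConst (ι : Type) [Fintype ι] (d : ℕ) (α c₂ : ℝ) : ℝ :=
  slopeConst ι d * √d ^ α * c₂ * 4 ^ (1 - α) + 1

/-- The constant in the decay of the superlevel sets of the gradient. -/
def decayConst (ι : Type) [Fintype ι] (d : ℕ) (α c₁ c₂ : ℝ) : ℝ :=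
  superlevelConst d * 2 ^ d * thresholdConst ι d α c₂ ^ (2 / (1 - α)) * (c₁ / 16 * 16 ^ d)

/-- The constant that the layer cake formula makes out of `decayConst`. -/
def localConst (ι : Type) [Fintype ι] (d : ℕ) (p q α c₁ c₂ : ℝ) : ℝ :=
  thresholdConst ι d α c₂ ^ q + decayConst ι d α c₁ c₂ * (q / (p + 2 / (1 - α) - q) *
    thresholdConst ι d α c₂ ^ (q - (p + 2 / (1 - α))))

lemma thresholdConst_pos (ι : Type) [Fintype ι] (d : ℕ) (α : ℝ) (hc₂ : 0 ≤ c₂) :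
    0 < thresholdConst ι d α c₂ := by
  have := slopeConst_nonneg ι d
  unfold thresholdConst
  positivity

lemma decayConst_nonneg (ι : Type) [Fintype ι] (d : ℕ) (α : ℝ) (hc₁ : 0 ≤ c₁) (hc₂ : 0 ≤ c₂) :
    0 ≤ decayConst ι d α c₁ c₂ := by
  have := superlevelConst_nonneg d
  have := thresholdConst_pos ι d α hc₂
  unfold decayConst
  positivity

lemma localConst_pos (ι : Type) [Fintype ι] (d : ℕ) (hc₁ : 0 ≤ c₁) (hc₂ : 0 ≤ c₂) (hq : 0 < q)
    (hqs : q < p + 2 / (1 - α)) : 0 < localConst ι d p q α c₁ c₂ := by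
  have := decayConst_nonneg ι d α hc₁ hc₂
  have := thresholdConst_pos ι d α hc₂
  have := sub_pos.2 hqs
  unfold localConst
  positivity

namespace IsCaccioppoliHolder

lemma isVRegular (h : IsCaccioppoliHolder p α c₁ c₂ U v g W) (hU : MeasurableSet U) (hp : 1 ≤ p)
    (hr : 0 < r) (hsub : cube z (4 * r) ⊆ U) : IsVRegular p (cube z r) v g W := by
  have hzU : cube z r ⊆ U := (cube_subset_cube (by linarith)).trans hsub
  have hmono := Measure.restrict_mono hzU le_rfl (μ := volume)
  have : IsFiniteMeasure (volume.restrict (cube z r)) := ⟨by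
    simpa using (volume_cube_ne_top z hr.le).lt_top⟩
  exact
    { integrableOn := (h.memLp.mono_measure hmono).integrable (by simpa using hp)
      isWeakGrad := h.isWeakGrad.mono hU hzU
      memLp_grad := h.memLp_grad.mono_measure hmono
      isWeakGrad_Vm := h.isWeakGrad_Vm.mono hU hzU
      aestronglyMeasurable := (h.caccioppoli z r hr hsub).1.1 }

lemma setLIntegral_enorm_sq_le (h : IsCaccioppoliHolder p α c₁ c₂ U v g W) (hp : 0 < p)
    (hc₁ : 0 ≤ c₁) (hr : 0 < r) (hsub : cube z (4 * r) ⊆ U) :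
    ∫⁻ x in cube z r, ‖W x‖ₑ ^ 2 ≤
      ENNReal.ofReal (c₁ / r ^ 2 * ((4 * r) ^ d * meanSize p g z (4 * r) ^ p)) := by
  have hg := h.memLp_grad.mono_measure (Measure.restrict_mono hsub le_rfl)
  rw [ENNReal.ofReal_mul (by positivity)]
  refine (h.caccioppoli z r hr hsub).2.trans ?_
  simp_rw [enorm_Vm_sq hp.ne']
  gcongr ENNReal.ofReal _ * ?_
  exact setLIntegral_norm_rpow_le_meanSize hp (by positivity) hg

lemma norm_sub_le_two_pow_mul_meanSize (h : IsCaccioppoliHolder p α c₁ c₂ U v g W) (hp : 1 ≤ p)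
    (hc₂ : 0 ≤ c₂) (hr : 0 < r) (hsub : cube z (4 * r) ⊆ U) {x y : Ed d} (hx : x ∈ cube z r)
    (hy : y ∈ cube z r) :
    ‖v x - v y‖ ≤ c₂ * r ^ (1 - α) * (2 ^ d * meanSize p g z (4 * r)) * dist x y ^ α := by
  refine (h.holder z r hr ((cube_subset_cube (by linarith)).trans hsub) x hx y hy).trans ?_
  have hsize : meanSize p g z (2 * r) ≤ (4 * r / (2 * r)) ^ d * meanSize p g z (4 * r) :=
    meanSize_le_of_subset hp (by positivity) (by linarith) (cube_subset_cube (by linarith))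
      (h.memLp_grad.mono_measure (Measure.restrict_mono hsub le_rfl))
  rw [mul_div_mul_right _ _ hr.ne', (by norm_num : (4 : ℝ) / 2 = 2)] at hsize
  gcongr

lemma ofReal_mul_setLIntegral_enorm_sq_le (h : IsCaccioppoliHolder p α c₁ c₂ U v g W)
    (hp : 0 < p) (hα : α < 1) (hc₁ : 0 ≤ c₁) (hc₂ : 0 ≤ c₂) (hρ : 0 < ρ)
    (hsub : cube z (16 * ρ) ⊆ U) {K : ℝ} (hK : meanSize p g z (16 * ρ) ≤ K) :
    ENNReal.ofReal (superlevelConst d * 2 ^ d *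
        (thresholdConst ι d α c₂ * K * ρ ^ (1 - α)) ^ (2 / (1 - α))) *
        ∫⁻ x in cube z (4 * ρ), ‖W x‖ₑ ^ 2 ≤
      ENNReal.ofReal (decayConst ι d α c₁ c₂ * ρ ^ d * K ^ (p + 2 / (1 - α))) := by
  have hT := thresholdConst_pos ι d α hc₂
  have hσ := superlevelConst_nonneg d
  have hm := one_le_meanSize p g z (16 * ρ)
  have hK0 : 0 < K := by linarith
  have h16 : 4 * (4 * ρ) = 16 * ρ := by ring
  have henergy := h.setLIntegral_enorm_sq_le hp hc₁ (by positivity) (h16 ▸ hsub)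
  have hρpow : (ρ ^ (1 - α)) ^ (2 / (1 - α)) = ρ ^ 2 := by
    rw [← Real.rpow_mul hρ.le, mul_div_cancel₀ _ (sub_pos.2 hα).ne', Real.rpow_two]
  refine (mul_le_mul_right henergy _).trans ?_
  rw [← ENNReal.ofReal_mul (by positivity), h16]
  refine ENNReal.ofReal_le_ofReal ?_
  calc _ ≤ superlevelConst d * 2 ^ d *
          (thresholdConst ι d α c₂ * K * ρ ^ (1 - α)) ^ (2 / (1 - α)) *
          (c₁ / (4 * ρ) ^ 2 * ((16 * ρ) ^ d * K ^ p)) := by gcongr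
    _ = _ := by
      rw [Real.mul_rpow (by positivity) (by positivity), Real.mul_rpow hT.le hK0.le, hρpow,
        Real.rpow_add hK0, decayConst, mul_pow, mul_pow]
      field_simp
      norm_num

lemma measure_lt_norm_le (h : IsCaccioppoliHolder p α c₁ c₂ U v g W) (hU : MeasurableSet U)
    (hp : 1 ≤ p) (hα : α ∈ Ico 0 1) (hc₁ : 0 ≤ c₁) (hc₂ : 0 ≤ c₂) (hρ : 0 < ρ)
    (hsub : cube z (16 * ρ) ⊆ U)
    (hl : thresholdConst ι d α c₂ * (2 ^ d * meanSize p g z (16 * ρ)) ≤ l) :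
    volume.restrict (cube z ρ) {x | l < ‖g x‖} ≤
      ENNReal.ofReal (decayConst ι d α c₁ c₂ * ρ ^ d *
        (2 ^ d * meanSize p g z (16 * ρ)) ^ (p + 2 / (1 - α))) *
        ENNReal.ofReal (l ^ (-(p + 2 / (1 - α)))) := by
  have h16 : 4 * (4 * ρ) = 16 * ρ := by ring
  have hm := one_le_meanSize p g z (16 * ρ)
  set K := 2 ^ d * meanSize p g z (16 * ρ) with hK
  have hK0 : 0 < K := by positivity
  have hmK : meanSize p g z (16 * ρ) ≤ K :=
    le_mul_of_one_le_left (by linarith) (one_le_pow₀ one_le_two)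
  have hT := thresholdConst_pos ι d α hc₂
  have hslope : slopeConst ι d * √d ^ α * (c₂ * (4 * ρ) ^ (1 - α) * K) ≤
      thresholdConst ι d α c₂ * K * ρ ^ (1 - α) := by
    rw [thresholdConst, Real.mul_rpow zero_le_four hρ.le]
    nlinarith [mul_pos hK0 (Real.rpow_pos_of_pos hρ (1 - α))]
  have hlevel : thresholdConst ι d α c₂ * K * ρ ^ (1 - α) * ρ ^ (α - 1) ≤ l := by
    rwa [mul_assoc, ← Real.rpow_add hρ, sub_add_sub_cancel, sub_self, Real.rpow_zero, mul_one]
  have hreg := h.isVRegular hU hp (by positivity : 0 < 4 * ρ) (h16 ▸ hsub)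
  refine (hreg.measure_lt_norm_le hp hα (by positivity) (fun x hx y hy => ?_) (by positivity)
    hslope hρ hlevel).trans (mul_le_mul_left ?_ _)
  · rw [hK, ← h16]
    exact h.norm_sub_le_two_pow_mul_meanSize hp hc₂ (by positivity) (h16 ▸ hsub) hx hy
  · exact h.ofReal_mul_setLIntegral_enorm_sq_le (by linarith) hα.2 hc₁ hc₂ hρ hsub hmK

lemma setLIntegral_norm_rpow_le (h : IsCaccioppoliHolder p α c₁ c₂ U v g W) (hU : MeasurableSet U)
    (hp : 1 ≤ p) (hα : α ∈ Ico 0 1) (hc₁ : 0 ≤ c₁) (hc₂ : 0 ≤ c₂) (hq : 0 < q)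
    (hqs : q < p + 2 / (1 - α)) (hρ : 0 < ρ) (hsub : cube z (16 * ρ) ⊆ U) :
    ∫⁻ x in cube z ρ, ENNReal.ofReal (‖g x‖ ^ q) ≤
      ENNReal.ofReal (localConst ι d p q α c₁ c₂ * ρ ^ d *
        (2 ^ d * meanSize p g z (16 * ρ)) ^ q) := by
  have hm := one_le_meanSize p g z (16 * ρ)
  have hgm := h.memLp_grad.1.mono_set ((cube_subset_cube (by linarith)).trans hsub : cube z ρ ⊆ U)
  have hdecay := fun l => h.measure_lt_norm_le (l := l) hU hp hα hc₁ hc₂ hρ hsub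
  have hT := thresholdConst_pos ι d α hc₂
  have hD := decayConst_nonneg ι d α hc₁ hc₂
  have hsq := sub_pos.2 hqs
  set K := 2 ^ d * meanSize p g z (16 * ρ)
  set s := p + 2 / (1 - α) with hs
  have hK : 0 < K := by positivity
  refine (lintegral_rpow_le_of_measure_lt_le (fun _ => norm_nonneg _) hgm.norm.aemeasurable hq hqs
    (by positivity) ENNReal.ofReal_ne_top hdecay).trans_eq ?_
  rw [Measure.restrict_apply_univ, volume_cube z hρ.le, ← ENNReal.ofReal_mul (by positivity),
    ← ENNReal.ofReal_mul (by positivity), ← ENNReal.ofReal_add (by positivity) (by positivity),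
    Real.mul_rpow hT.le hK.le, Real.mul_rpow hT.le hK.le, localConst, ← hs]
  congr 1
  have hKs : K ^ s * K ^ (q - s) = K ^ q := by rw [← Real.rpow_add hK, add_sub_cancel]
  linear_combination (decayConst ι d α c₁ c₂ * ρ ^ d * (q / (s - q)) *
    thresholdConst ι d α c₂ ^ (q - s)) * hKs

lemma setLIntegral_norm_rpow_le_of_two_mul (h : IsCaccioppoliHolder p α c₁ c₂ U v g W)
    (hU : MeasurableSet U) (hp : 1 ≤ p) (hα : α ∈ Ico 0 1) (hc₁ : 0 ≤ c₁) (hc₂ : 0 ≤ c₂)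
    (hq : 0 < q) (hqs : q < p + 2 / (1 - α)) (hR : 0 < R) (hsub : cube c (2 * R) ⊆ U) :
    ∫⁻ x in cube c R, ENNReal.ofReal (‖g x‖ ^ q) ≤
      ENNReal.ofReal (localConst ι d p q α c₁ c₂ * (2 * R) ^ d *
        (5 ^ d * meanSize p g c (2 * R)) ^ q) := by
  have hE := localConst_pos ι d hc₁ hc₂ hq hqs
  have hgm := h.memLp_grad.1.mono_set ((cube_subset_cube (by linarith)).trans hsub : cube c R ⊆ U)
  have hm := one_le_meanSize p g c (2 * R)
  have hρ : 0 < R / 20 := by positivity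
  have hlocal : ∀ z ∈ cube c (R + R / 20), ∫⁻ x in cube z (R / 20), ENNReal.ofReal (‖g x‖ ^ q) ≤
      ENNReal.ofReal (localConst ι d p q α c₁ c₂ * (R / 20) ^ d *
        (5 ^ d * meanSize p g c (2 * R)) ^ q) := by
    intro z hz
    have hz16 : cube z (16 * (R / 20)) ⊆ cube c (2 * R) := cube_subset_cube_of_mem hz (by linarith)
    have hmz := one_le_meanSize p g z (16 * (R / 20))
    have hsize : 2 ^ d * meanSize p g z (16 * (R / 20)) ≤ 5 ^ d * meanSize p g c (2 * R) := calc
      _ ≤ 2 ^ d * ((2 * R / (16 * (R / 20))) ^ d * meanSize p g c (2 * R)) := by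
        gcongr
        exact meanSize_le_of_subset hp (by positivity) (by linarith) hz16
          (h.memLp_grad.mono_measure (Measure.restrict_mono hsub le_rfl))
      _ = _ := by
        rw [← mul_assoc, ← mul_pow]
        congr 2
        field_simp
        norm_num
    refine (h.setLIntegral_norm_rpow_le hU hp hα hc₁ hc₂ hq hqs hρ (hz16.trans hsub)).trans ?_
    gcongr
  refine (setLIntegral_cube_le_of_forall_le hρ hR.le
    (hgm.norm.aemeasurable.pow_const q).ennreal_ofReal hlocal).trans ?_
  rw [← ENNReal.ofReal_mul (by positivity)]
  refine ENNReal.ofReal_le_ofReal ?_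
  rw [← mul_assoc, mul_left_comm, ← mul_pow, div_mul_cancel₀ _ hρ.ne']
  gcongr
  linarith

end IsCaccioppoliHolder

end HigherIntegrability

theorem stmt9_general (ι : Type) [Fintype ι] (d : ℕ) {p q α c₁ c₂ : ℝ} (hp : 1 ≤ p)
    (hα : α ∈ Ico 0 1) (hc₁ : 0 ≤ c₁) (hc₂ : 0 ≤ c₂) (hq : 0 < q) (hqs : q < p + 2 / (1 - α)) :
    ∃ C, 0 < C ∧ ∀ (U : Set (Ed d)) (v : Ed d → EuclideanSpace ℝ ι)
      (g : Ed d → EuclideanSpace ℝ (ι × Fin d))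
      (W : Ed d → EuclideanSpace ℝ ((ι × Fin d) × Fin d)), MeasurableSet U →
      IsCaccioppoliHolder p α c₁ c₂ U v g W →
      ∀ (c : Ed d) (R : ℝ), 0 < R → cube c (2 * R) ⊆ U →
        MemLp g (ENNReal.ofReal q) (volume.restrict (cube c R)) ∧
        (⨍ x in cube c R, ‖g x‖ ^ q) ^ (1 / q) ≤ C * meanSize p g c (2 * R) := by
  have hE := localConst_pos ι d hc₁ hc₂ hq hqs
  refine ⟨(localConst ι d p q α c₁ c₂ * 2 ^ d) ^ (1 / q) * 5 ^ d, by positivity,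
    fun U v g W hU h c R hR hsub => ?_⟩
  have hgm := h.memLp_grad.1.mono_set ((cube_subset_cube (by linarith)).trans hsub : cube c R ⊆ U)
  have hm := one_le_meanSize p g c (2 * R)
  have hint := h.setLIntegral_norm_rpow_le_of_two_mul hU hp hα hc₁ hc₂ hq hqs hR hsub
  have hmem : MemLp g (ENNReal.ofReal q) (volume.restrict (cube c R)) :=
    memLp_ofReal_of_lintegral_ne_top hq hgm (ne_top_of_le_ne_top ENNReal.ofReal_ne_top hint)
  refine ⟨hmem, ?_⟩
  set K := 5 ^ d * meanSize p g c (2 * R) with hK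
  have hK0 : 0 < K := by positivity
  rw [mul_assoc, ← hK]
  refine rpow_setAverage_norm_rpow_le hq hR hmem (by positivity) (hint.trans_eq ?_)
  rw [Real.mul_rpow (by positivity) hK0.le, ← Real.rpow_mul (by positivity),
    one_div_mul_cancel hq.ne', Real.rpow_one, mul_pow]
  ring_nf

/-- Higher integrability up to `L^q`, `q ∈ (p, p + 2/(1−α))`, for
`1 < p < 2`: `∇u ∈ L^q_loc(Q₀)` with `(⨍_Q |∇u|^q)^{1/q} ≤ C((⨍_{2Q}|∇u|^p)^{1/p} + 1)`
whenever `2Q ⊆ Q₀`, with `C = C(d,N,p,q,α,c₁,c₂)`. -/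
theorem stmt9 (d N : ℕ) (p α c₁ c₂ : ℝ) (hp1 : 1 < p) (hp2 : p < 2) (hα : α ∈ Set.Ioo (0 : ℝ) 1)
    (hc₁ : 0 < c₁) (hc₂ : 0 < c₂) :
    ∀ q : ℝ, p < q → q < p + 2 / (1 - α) →
    ∃ C : ℝ, 0 < C ∧
      ∀ (c₀ : Ed d) (R₀ : ℝ), 0 < R₀ →
      ∀ (u v : Ed d → En N) (g : Ed d → Mat N d)
        (W : Ed d → EuclideanSpace ℝ ((Fin N × Fin d) × Fin d)),
        -- `u ∈ W^{1,p}(Q₀;ℝ^N)` with weak gradient `g`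
        MemLp u (ENNReal.ofReal p) (volume.restrict (cube c₀ R₀)) →
        IsWeakGrad (cube c₀ R₀) u g →
        MemLp g (ENNReal.ofReal p) (volume.restrict (cube c₀ R₀)) →
        -- (i) `V(∇u) ∈ W^{1,2}_loc(Q₀)` with the Caccioppoli estimate
        IsWeakGrad (cube c₀ R₀) (fun x => Vm p (g x)) W →
        (∀ (cq : Ed d) (R : ℝ), 0 < R → cube cq (4 * R) ⊆ cube c₀ R₀ →
          MemLp W 2 (volume.restrict (cube cq R)) ∧
          ∫⁻ x in cube cq R, (‖W x‖₊ : ℝ≥0∞) ^ 2 ≤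
            ENNReal.ofReal (c₁ / R ^ 2) *
              ∫⁻ x in cube cq (4 * R), (‖Vm p (g x)‖₊ : ℝ≥0∞) ^ 2) →
        -- (ii) `v` is a continuous representative satisfying the Hölder estimate
        ContinuousOn v (cube c₀ R₀) →
        u =ᵐ[volume.restrict (cube c₀ R₀)] v →
        (∀ (cq : Ed d) (R : ℝ), 0 < R → cube cq (3 * R) ⊆ cube c₀ R₀ →
          ∀ x ∈ cube cq R, ∀ y ∈ cube cq R,
            ‖v x - v y‖ ≤
              c₂ * R ^ (1 - α) * ((⨍ z in cube cq (2 * R), ‖g z‖ ^ p) ^ (1 / p) + 1) *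
                dist x y ^ α) →
      ∀ (cq : Ed d) (R : ℝ), 0 < R → cube cq (2 * R) ⊆ cube c₀ R₀ →
        MemLp g (ENNReal.ofReal q) (volume.restrict (cube cq R)) ∧
        (⨍ x in cube cq R, ‖g x‖ ^ q) ^ (1 / q) ≤
          C * ((⨍ x in cube cq (2 * R), ‖g x‖ ^ p) ^ (1 / p) + 1) := by
  intro q hpq hq
  obtain ⟨C, hC, hmain⟩ := stmt9_general (Fin N) d hp1.le (Ioo_subset_Ico_self hα) hc₁.le hc₂.le
    (by linarith) hq
  exact ⟨C, hC, fun c₀ R₀ _ u v g W hu hug hg hVW hcaccioppoli _ huv hholder =>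
    hmain _ v g W (measurableSet_cube c₀ R₀)
      ⟨hu.ae_eq huv, hug.congr_ae huv, hg, hVW, hcaccioppoli, hholder⟩⟩
end
end

section
/- Let d ∈ ℕ, p ≥ 1, α ∈ (0,1], let B₀ ⊂ ℝ^d be an open ball and 3B₀ the concentric ball with three times the radius, and let u : 3B₀ → ℝ be continuous and integrable on 3B₀. Define the Campanato seminorm [u]_{L^{p,d+pα}(3B₀)} := sup{ρ^{−α}(⨍_B|u − ⟨u⟩_B|^p)^{1/p} : B an open ball of radius ρ with B ⊆ 3B₀} and the Hölder seminorm [u]_{C^α(B₀)} := sup{|u(x) − u(y)|/|x−y|^α : x, y ∈ B₀, x ≠ y}. Then there is C > 0, depending only on d and α, such that [u]_{C^α(B₀)} ≤ C [u]_{L^{p,d+pα}(3B₀)}. -/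
open MeasureTheory Metric

/-!
Replacing a ball by a ball of half the radius contained in it changes the average of `u` by at most
`2 ^ d` times the mean oscillation of `u` over the larger ball, which Jensen's inequality bounds by
`K * ρ ^ α` whatever the exponent `p`. Along the concentric balls of radii `r / 2 ^ n` these changes
form a geometric series, and the averages tend to `u x` by continuity, so `u x` is within a multiple
of `K * r ^ α` of its average over `ball x r`. For `r = dist x y` the averages over `ball x r` and
`ball y r` are compared through the ball of radius `r / 2` around the midpoint of `x` and `y`.
-/

open Filter Module Topology

section Average

variable {X F : Type*} [MeasurableSpace X] [NormedAddCommGroup F] [NormedSpace ℝ F]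
  {μ : Measure X} {s t : Set X}

theorem norm_setAverage_sub_le_setAverage_norm_sub [CompleteSpace F] {u : X → F}
    (hs₀ : μ s ≠ 0) (hs : μ s ≠ ⊤) (hu : IntegrableOn u s μ) (a : F) :
    ‖(⨍ z in s, u z ∂μ) - a‖ ≤ ⨍ z in s, ‖u z - a‖ ∂μ := by
  have hconvex : ConvexOn ℝ Set.univ fun v : F => ‖v - a‖ := by
    simpa only [dist_eq_norm] using convexOn_univ_dist a
  exact hconvex.map_set_average_le (by fun_prop) isClosed_univ hs₀ hs
    (Eventually.of_forall fun _ => Set.mem_univ _) hu (hu.sub (integrableOn_const hs)).norm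

theorem setAverage_le_measureReal_div_mul_setAverage {f : X → ℝ} (hf₀ : ∀ z, 0 ≤ f z)
    (hf : IntegrableOn f t μ) (ht : μ t ≠ ⊤) (hst : s ⊆ t) :
    ⨍ z in s, f z ∂μ ≤ μ.real t / μ.real s * ⨍ z in t, f z ∂μ := by
  have hmono : ∫ z in s, f z ∂μ ≤ ∫ z in t, f z ∂μ :=
    setIntegral_mono_set hf (Eventually.of_forall hf₀) (Eventually.of_forall hst)
  calc ⨍ z in s, f z ∂μ = (μ.real s)⁻¹ * ∫ z in s, f z ∂μ := setAverage_eq ..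
    _ ≤ (μ.real s)⁻¹ * ∫ z in t, f z ∂μ := by gcongr
    _ = (μ.real s)⁻¹ * (μ.real t * ⨍ z in t, f z ∂μ) := by
      rw [← measure_smul_setAverage f ht, smul_eq_mul]
    _ = μ.real t / μ.real s * ⨍ z in t, f z ∂μ := by ring

theorem norm_setAverage_sub_setAverage_le [CompleteSpace F] {u : X → F} (hs₀ : μ s ≠ 0)
    (ht : μ t ≠ ⊤) (hu : IntegrableOn u t μ) (hst : s ⊆ t) :
    ‖(⨍ z in s, u z ∂μ) - ⨍ z in t, u z ∂μ‖ ≤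
      μ.real t / μ.real s * ⨍ z in t, ‖u z - ⨍ w in t, u w ∂μ‖ ∂μ :=
  (norm_setAverage_sub_le_setAverage_norm_sub hs₀ (measure_ne_top_of_subset hst ht)
    (hu.mono_set hst) _).trans
  (setAverage_le_measureReal_div_mul_setAverage (fun _ => norm_nonneg _)
    (hu.sub (integrableOn_const ht)).norm ht hst)

theorem setAverage_le_rpow_setAverage_rpow {f : X → ℝ} {p : ℝ} (hp : 1 ≤ p) (hs₀ : μ s ≠ 0)
    (hs : μ s ≠ ⊤) (hf₀ : ∀ z, 0 ≤ f z) (hf : IntegrableOn f s μ)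
    (hfp : IntegrableOn (fun z => f z ^ p) s μ) :
    ⨍ z in s, f z ∂μ ≤ (⨍ z in s, f z ^ p ∂μ) ^ (1 / p) := by
  have hp₀ : 0 < p := one_pos.trans_le hp
  have jensen : (⨍ z in s, f z ∂μ) ^ p ≤ ⨍ z in s, f z ^ p ∂μ :=
    (convexOn_rpow hp).map_set_average_le (Real.continuous_rpow_const hp₀.le).continuousOn
      isClosed_Ici hs₀ hs (Eventually.of_forall hf₀) hf hfp
  have average_nonneg : 0 ≤ ⨍ z in s, f z ∂μ := integral_nonneg hf₀
  rw [one_div]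
  exact (Real.le_rpow_inv_iff_of_pos average_nonneg
    ((Real.rpow_nonneg average_nonneg p).trans jensen) hp₀).2 jensen

/-- The `L^p` mean oscillation of `u` over `s`. Averages are Bochner integrals, so the value is
meaningful only if `u` and the integrand are integrable on `s`. -/
noncomputable def lpMeanOscillation (μ : Measure X) (u : X → F) (p : ℝ) (s : Set X) : ℝ :=
  (⨍ z in s, ‖u z - ⨍ w in s, u w ∂μ‖ ^ p ∂μ) ^ (1 / p)

end Average

theorem tendsto_setAverage_ball {X F : Type*} [PseudoMetricSpace X] [MeasurableSpace X]
    [OpensMeasurableSpace X] [NormedAddCommGroup F] [NormedSpace ℝ F] [CompleteSpace F]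
    {μ : Measure X} [μ.IsOpenPosMeasure] [IsLocallyFiniteMeasure μ] {u : X → F} {x : X}
    (hu : ContinuousAt u x) (hint : IntegrableAtFilter u (𝓝 x) μ) :
    Tendsto (fun r => ⨍ z in ball x r, u z ∂μ) (𝓝[>] 0) (𝓝 (u x)) := by
  have hballs : Tendsto (ball x) (𝓝[>] 0) (𝓝 x).smallSets :=
    ((tendsto_closedBall_smallSets x).mono_left nhdsWithin_le_nhds).smallSets_mono
      (Eventually.of_forall fun _ => ball_subset_closedBall)
  rw [nhds_basis_closedBall.tendsto_right_iff]
  intro ε hε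
  have hclose : ∀ᶠ r in 𝓝[>] 0, ∀ z ∈ ball x r, u z ∈ closedBall (u x) ε :=
    hballs.eventually (eventually_smallSets_forall.2 (hu (closedBall_mem_nhds _ hε)))
  filter_upwards [hclose, hballs.eventually hint.eventually,
    hballs.eventually (μ.finiteAt_nhds x).eventually, self_mem_nhdsWithin]
    with r hr hintr hfin hr₀
  exact (convex_closedBall _ _).set_average_mem isClosed_closedBall
    (measure_ball_pos μ x hr₀).ne' hfin.ne (ae_restrict_of_forall_mem measurableSet_ball hr) hintr

/-- The Campanato seminorm of `u` over `s`, with integrability exponent `p` and Hölder exponent `α`,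
is at most `K`. Only balls whose closed ball lies in `s` are tested: in a proper space, a function
continuous on `s` is integrable on these. -/
def CampanatoBoundOn {X F : Type*} [PseudoMetricSpace X] [MeasurableSpace X]
    [NormedAddCommGroup F] [NormedSpace ℝ F] (μ : Measure X) (u : X → F) (s : Set X)
    (p α K : ℝ) : Prop :=
  ∀ (c : X) (ρ : ℝ), 0 < ρ → closedBall c ρ ⊆ s → lpMeanOscillation μ u p (ball c ρ) ≤ K * ρ ^ α

section Haar

variable {E F : Type*} [NormedAddCommGroup E] [NormedSpace ℝ E] [FiniteDimensional ℝ E]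
  [MeasurableSpace E] [BorelSpace E] [NormedAddCommGroup F] [NormedSpace ℝ F]
  {μ : Measure E} [μ.IsAddHaarMeasure]

theorem addHaar_real_ball_div_addHaar_real_ball (x y : E) {r s : ℝ} (hr : 0 < r) (hs : 0 < s) :
    μ.real (ball x r) / μ.real (ball y s) = (r / s) ^ finrank ℝ E := by
  have hunit : μ.real (ball (0 : E) 1) ≠ 0 :=
    (ENNReal.toReal_pos (measure_ball_pos μ 0 one_pos).ne' measure_ball_lt_top.ne).ne'
  have hscale (c : E) {ρ : ℝ} (hρ : 0 < ρ) :
      μ.real (ball c ρ) = ρ ^ finrank ℝ E * μ.real (ball (0 : E) 1) := by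
    rw [measureReal_def, Measure.addHaar_ball_of_pos μ c hρ, ENNReal.toReal_mul,
      ENNReal.toReal_ofReal (by positivity), measureReal_def]
  rw [hscale x hr, hscale y hs, mul_div_mul_right _ _ hunit, div_pow]

theorem setAverage_norm_sub_le_lpMeanOscillation {u : E → F} {p : ℝ} (hp : 1 ≤ p) {c : E} {ρ : ℝ}
    (hρ : 0 < ρ) (hu : ContinuousOn u (closedBall c ρ)) :
    ⨍ z in ball c ρ, ‖u z - ⨍ w in ball c ρ, u w ∂μ‖ ∂μ ≤ lpMeanOscillation μ u p (ball c ρ) := by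
  have integrable_of_continuousOn {f : E → ℝ} (hf : ContinuousOn f (closedBall c ρ)) :
      IntegrableOn f (ball c ρ) μ :=
    (hf.integrableOn_compact (isCompact_closedBall c ρ)).mono_set ball_subset_closedBall
  have hdev : ContinuousOn (fun z => ‖u z - ⨍ w in ball c ρ, u w ∂μ‖) (closedBall c ρ) :=
    (hu.sub continuousOn_const).norm
  exact setAverage_le_rpow_setAverage_rpow hp (measure_ball_pos μ c hρ).ne'
    measure_ball_lt_top.ne (fun _ => norm_nonneg _) (integrable_of_continuousOn hdev)
    (integrable_of_continuousOn (hdev.rpow_const fun _ _ => .inr (by positivity)))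

/-- The constant in Campanato's embedding in dimension `d`: from each of the two points, a change of
at most `2 ^ d` to reach the ball around the midpoint, and `2 ^ d` times the sum of a geometric
series of ratio `2 ^ (-α)` to reach the value of the function. -/
noncomputable def campanatoHolderConst (d : ℕ) (α : ℝ) : ℝ :=
  2 * (2 ^ d / (1 - (1 / 2) ^ α) + 2 ^ d)

theorem one_sub_half_rpow_pos {α : ℝ} (hα : 0 < α) : 0 < 1 - (1 / 2 : ℝ) ^ α :=
  sub_pos.2 (Real.rpow_lt_one (by norm_num) (by norm_num) hα)

theorem campanatoHolderConst_pos (d : ℕ) {α : ℝ} (hα : 0 < α) : 0 < campanatoHolderConst d α := by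
  have := one_sub_half_rpow_pos hα
  unfold campanatoHolderConst
  positivity

namespace CampanatoBoundOn

variable [CompleteSpace F] {u : E → F} {s : Set E} {p α K : ℝ}

theorem norm_setAverage_half_sub_setAverage_le (h : CampanatoBoundOn μ u s p α K) (hp : 1 ≤ p)
    (hu : ContinuousOn u s) {c c' : E} {ρ : ℝ} (hρ : 0 < ρ) (hc : closedBall c ρ ⊆ s)
    (hsub : ball c' (ρ / 2) ⊆ ball c ρ) :
    ‖(⨍ z in ball c' (ρ / 2), u z ∂μ) - ⨍ z in ball c ρ, u z ∂μ‖ ≤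
      2 ^ finrank ℝ E * (K * ρ ^ α) := by
  have huc : ContinuousOn u (closedBall c ρ) := hu.mono hc
  have hint : IntegrableOn u (ball c ρ) μ :=
    (huc.integrableOn_compact (isCompact_closedBall c ρ)).mono_set ball_subset_closedBall
  have hratio : μ.real (ball c ρ) / μ.real (ball c' (ρ / 2)) = 2 ^ finrank ℝ E := by
    rw [addHaar_real_ball_div_addHaar_real_ball c c' hρ (half_pos hρ), div_div_cancel₀ hρ.ne']
  calc ‖(⨍ z in ball c' (ρ / 2), u z ∂μ) - ⨍ z in ball c ρ, u z ∂μ‖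
      ≤ 2 ^ finrank ℝ E * ⨍ z in ball c ρ, ‖u z - ⨍ w in ball c ρ, u w ∂μ‖ ∂μ :=
        hratio ▸ norm_setAverage_sub_setAverage_le (measure_ball_pos μ c' (half_pos hρ)).ne'
          measure_ball_lt_top.ne hint hsub
    _ ≤ 2 ^ finrank ℝ E * lpMeanOscillation μ u p (ball c ρ) := by
        gcongr
        exact setAverage_norm_sub_le_lpMeanOscillation hp hρ huc
    _ ≤ 2 ^ finrank ℝ E * (K * ρ ^ α) := by
        gcongr
        exact h c ρ hρ hc

theorem norm_setAverage_sub_apply_le (h : CampanatoBoundOn μ u s p α K) (hp : 1 ≤ p) (hα : 0 < α)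
    (hu : ContinuousOn u s) {x : E} {r : ℝ} (hr : 0 < r) (hx : closedBall x r ⊆ s) :
    ‖(⨍ z in ball x r, u z ∂μ) - u x‖ ≤ 2 ^ finrank ℝ E * (K * r ^ α) / (1 - (1 / 2) ^ α) := by
  have hux : ContinuousOn u (closedBall x r) := hu.mono hx
  have hradius (n : ℕ) : 0 < r * (1 / 2) ^ n := by positivity
  have hradii : Tendsto (fun n : ℕ => r * (1 / 2) ^ n) atTop (𝓝[>] 0) :=
    tendsto_nhdsWithin_iff.2 ⟨by
      simpa using (tendsto_pow_atTop_nhds_zero_of_lt_one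
        (by norm_num : (0 : ℝ) ≤ 1 / 2) (by norm_num)).const_mul r, Eventually.of_forall hradius⟩
  have hlim : Tendsto (fun n : ℕ => ⨍ z in ball x (r * (1 / 2) ^ n), u z ∂μ) atTop (𝓝 (u x)) :=
    (tendsto_setAverage_ball (hux.continuousAt (closedBall_mem_nhds x hr))
      ⟨_, closedBall_mem_nhds x hr, hux.integrableOn_compact (isCompact_closedBall x r)⟩).comp
      hradii
  have hstep (n : ℕ) : dist (⨍ z in ball x (r * (1 / 2) ^ n), u z ∂μ)
      (⨍ z in ball x (r * (1 / 2) ^ (n + 1)), u z ∂μ) ≤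
        2 ^ finrank ℝ E * (K * r ^ α) * ((1 / 2) ^ α) ^ n := by
    have hle : r * (1 / 2) ^ n ≤ r :=
      mul_le_of_le_one_right hr.le (pow_le_one₀ (by norm_num) (by norm_num))
    have hhalf : r * (1 / 2) ^ (n + 1) = r * (1 / 2) ^ n / 2 := by ring
    have hpow : (r * (1 / 2) ^ n) ^ α = r ^ α * ((1 / 2) ^ α) ^ n := by
      rw [Real.mul_rpow hr.le (by positivity), Real.rpow_pow_comm (by norm_num)]
    rw [dist_comm, dist_eq_norm, hhalf]
    refine (h.norm_setAverage_half_sub_setAverage_le hp hu (hradius n)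
      ((closedBall_subset_closedBall hle).trans hx)
      (ball_subset_ball (half_le_self (hradius n).le))).trans_eq ?_
    rw [hpow]
    ring
  simpa [dist_eq_norm] using dist_le_of_le_geometric_of_tendsto₀ _ _
    (sub_pos.1 (one_sub_half_rpow_pos hα)) hstep hlim

theorem norm_sub_le (h : CampanatoBoundOn μ u s p α K) (hp : 1 ≤ p) (hα : 0 < α)
    (hu : ContinuousOn u s) {x y : E} (hx : closedBall x (dist x y) ⊆ s)
    (hy : closedBall y (dist x y) ⊆ s) :
    ‖u x - u y‖ ≤ campanatoHolderConst (finrank ℝ E) α * K * dist x y ^ α := by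
  rcases eq_or_ne x y with rfl | hxy
  · simp [hα.ne']
  set r := dist x y with hr
  have hr₀ : 0 < r := dist_pos.2 hxy
  let m := midpoint ℝ x y
  have to_midpoint {z : E} (hz : closedBall z r ⊆ s) (hmz : dist m z = r / 2) :
      ‖u z - ⨍ w in ball m (r / 2), u w ∂μ‖ ≤
        2 ^ finrank ℝ E * (K * r ^ α) / (1 - (1 / 2) ^ α) + 2 ^ finrank ℝ E * (K * r ^ α) := by
    have hsub : ball m (r / 2) ⊆ ball z r := ball_subset_ball' (by rw [hmz, add_halves])
    refine (norm_sub_le_norm_sub_add_norm_sub _ (⨍ w in ball z r, u w ∂μ) _).trans ?_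
    rw [norm_sub_rev (u z), norm_sub_rev _ (⨍ w in ball m (r / 2), u w ∂μ)]
    exact add_le_add (h.norm_setAverage_sub_apply_le hp hα hu hr₀ hz)
      (h.norm_setAverage_half_sub_setAverage_le hp hu hr₀ hz hsub)
  have hmx : dist m x = r / 2 := by
    rw [dist_midpoint_left, Real.norm_ofNat, hr, inv_mul_eq_div]
  have hmy : dist m y = r / 2 := by
    rw [dist_midpoint_right, Real.norm_ofNat, hr, inv_mul_eq_div]
  calc ‖u x - u y‖ ≤ ‖u x - ⨍ w in ball m (r / 2), u w ∂μ‖ +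
          ‖u y - ⨍ w in ball m (r / 2), u w ∂μ‖ := by
        rw [norm_sub_rev (u y)]
        exact norm_sub_le_norm_sub_add_norm_sub ..
    _ ≤ _ := add_le_add (to_midpoint hx hmx) (to_midpoint hy hmy)
    _ = campanatoHolderConst (finrank ℝ E) α * K * r ^ α := by
        rw [campanatoHolderConst]
        ring

end CampanatoBoundOn

theorem stmt10_general [CompleteSpace F] {p α K : ℝ} (hp : 1 ≤ p) (hα : 0 < α) {x₀ : E} {ρ₀ : ℝ}
    {u : E → F} (hu : ContinuousOn u (ball x₀ (3 * ρ₀)))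
    (h : CampanatoBoundOn μ u (ball x₀ (3 * ρ₀)) p α K)
    {x y : E} (hx : x ∈ ball x₀ ρ₀) (hy : y ∈ ball x₀ ρ₀) :
    ‖u x - u y‖ ≤ campanatoHolderConst (finrank ℝ E) α * K * dist x y ^ α := by
  rw [mem_ball] at hx hy
  have hxy : dist x y < 2 * ρ₀ := by linarith [dist_triangle_right x y x₀]
  have hsub {z : E} (hz : dist z x₀ < ρ₀) : closedBall z (dist x y) ⊆ ball x₀ (3 * ρ₀) :=
    closedBall_subset_ball' (by linarith)
  exact h.norm_sub_le hp hα hu (hsub hx) (hsub hy)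

end Haar

/-- Campanato implies Hölder: there is `C > 0` depending only on `d` and `α`
such that whenever `u` is continuous and integrable on `3B₀` and its `L^{p,d+pα}`-Campanato
seminorm on `3B₀` is bounded by `K` (i.e. `(⨍_B |u − ⟨u⟩_B|^p)^{1/p} ≤ K ρ^α` for every ball
`B ⊆ 3B₀` of radius `ρ`), then `[u]_{C^α(B₀)} ≤ C K`. -/
theorem stmt10 (d : ℕ) (α : ℝ) (hα : α ∈ Set.Ioc (0 : ℝ) 1) :
    ∃ C : ℝ, 0 < C ∧
      ∀ (p : ℝ), 1 ≤ p →
      ∀ (x₀ : EuclideanSpace ℝ (Fin d)) (ρ₀ : ℝ), 0 < ρ₀ →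
      ∀ u : EuclideanSpace ℝ (Fin d) → ℝ,
        ContinuousOn u (ball x₀ (3 * ρ₀)) →
        IntegrableOn u (ball x₀ (3 * ρ₀)) →
        ∀ K : ℝ, 0 ≤ K →
        (∀ (c : EuclideanSpace ℝ (Fin d)) (ρ : ℝ), 0 < ρ → ball c ρ ⊆ ball x₀ (3 * ρ₀) →
          (⨍ z in ball c ρ, |u z - ⨍ w in ball c ρ, u w| ^ p) ^ (1 / p) ≤ K * ρ ^ α) →
        ∀ x ∈ ball x₀ ρ₀, ∀ y ∈ ball x₀ ρ₀, x ≠ y →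
          |u x - u y| ≤ C * K * dist x y ^ α := by
  refine ⟨campanatoHolderConst d α, campanatoHolderConst_pos d hα.1, ?_⟩
  intro p hp x₀ ρ₀ _ u hu _ K _ hK x hx y hy _
  have hcamp : CampanatoBoundOn volume u (ball x₀ (3 * ρ₀)) p α K := fun c ρ hρ hc =>
    hK c ρ hρ (ball_subset_closedBall.trans hc)
  simpa only [finrank_euclideanSpace_fin, Real.norm_eq_abs] using
    stmt10_general hp hα.1 hu hcamp hx hy
end
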